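/- Suppose Γ is a configuration satisfying the Working Conditions and having at least one bad vertex. Then for every positive integer N, every embedding of Γ into ℤ^N is either standard or semi-standard. -/

import Mathlib

namespace LensPaper

/-- A finite weighted simple graph: the combinatorial data underlying a configuration
(a disjoint union of weighted linear graphs).  The fact that every connected component
is a path is recorded separately by `Config.IsLinear`. -/
structure Config where
  V : Type
  fin : Fintype V
  deq : DecidableEq V
  graph : SimpleGraph V
  adjDec : DecidableRel graph.Adj
  w : V → ℤ

attribute [instance] Config.fin Config.deq Config.adjDec

namespace Config

/-- The degree of a vertex. -/
noncomputable def deg (C : Config) (v : C.V) : ℕ := (C.graph.neighborSet v).ncard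

/-- A configuration: every component is a path, i.e. all degrees are at most `2` and the
graph is acyclic. -/
def IsLinear (C : Config) : Prop :=
  (∀ v : C.V, C.deg v ≤ 2) ∧ C.graph.IsAcyclic

/-- The adjusted weight `w'(v) = w(v) - deg(v)`. -/
noncomputable def adjw (C : Config) (v : C.V) : ℤ := C.w v - C.deg v

/-- A vertex is bad if it is adjacent to two distinct vertices of positive adjusted
weight. -/
def IsBad (C : Config) (x : C.V) : Prop :=
  ∃ u v : C.V, u ≠ v ∧ C.graph.Adj x u ∧ C.graph.Adj x v ∧ 0 < C.adjw u ∧ 0 < C.adjw v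

/-- A leaf: a vertex of degree at most one. -/
def IsLeaf (C : Config) (v : C.V) : Prop := C.deg v ≤ 1

/-- `v 0, v 1, …, v m` is a chain of consecutive (distinct) vertices. -/
def IsChain (C : Config) (m : ℕ) (v : ℕ → C.V) : Prop :=
  (∀ i ≤ m, ∀ j ≤ m, v i = v j → i = j) ∧ ∀ i < m, C.graph.Adj (v i) (v (i + 1))

/-- The chain `v 0, …, v m` has the list `p` as its sequence of adjusted weights. -/
def ChainPattern (C : Config) (m : ℕ) (v : ℕ → C.V) (p : List ℤ) : Prop :=
  C.IsChain m v ∧ m + 1 = p.length ∧ ∀ i : Fin p.length, C.adjw (v i) = p.get i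

/-- `Γ` contains a chain of consecutive vertices whose adjusted weights, read in order,
form the list `p`. -/
def HasPattern (C : Config) (p : List ℤ) : Prop := ∃ m v, C.ChainPattern m v p

/-- A chain realizing a bad-part pattern `p` (each entry of `p` is an adjusted weight
together with a flag marking the bad positions): the chain has the prescribed adjusted
weights, and the bad vertices of the configuration are exactly the vertices of the chain
in the flagged positions. -/
def IsBadPartChain (C : Config) (p : List (ℤ × Bool)) (m : ℕ) (v : ℕ → C.V) : Prop :=
  C.IsChain m v ∧ m + 1 = p.length ∧
  (∀ i : Fin p.length, C.adjw (v i) = (p.get i).1) ∧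
  (∀ x : C.V, C.IsBad x ↔ ∃ i : Fin p.length, (p.get i).2 = true ∧ v i = x)

end Config

/-- The chains of adjusted weights forbidden by Working Condition VI. -/
def forbiddenPatterns : List (List ℤ) :=
  [[1, 0, 0, 2], [1, 0, 0, 3], [1, 0, 0, 0, 3], [1, 1, 0, 0, 1, 2], [3, 1, 0, 0, 1],
   [1, 0, 1, 2], [1, 0, 1, 3], [1, 1, 0, 2], [1, 1, 0, 1, 1, 2]]

/-- The bad-part patterns of Working Condition VII; `true` marks the bad positions. -/
def badPatterns : List (List (ℤ × Bool)) :=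
  [[(1, false), (0, true), (1, false)],
   [(1, false), (0, true), (2, false)],
   [(1, false), (0, true), (3, false)],
   [(1, false), (1, true), (1, false)],
   [(1, false), (1, true), (2, false)],
   [(1, false), (2, true), (1, false)],
   [(1, false), (0, true), (1, false), (0, true), (1, false)],
   [(1, false), (0, true), (1, false), (0, true), (2, false)],
   [(1, false), (0, true), (1, false), (1, true), (1, false)],
   [(1, false), (0, true), (1, false), (1, true), (2, false)],
   [(1, false), (1, true), (1, true), (1, false)],
   [(1, false), (1, true), (1, true), (1, true), (1, false)],
   [(1, false), (1, true), (2, true), (1, false)]]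

namespace Config

/-- The Working Conditions (I)–(VII). -/
def WorkingConditions (C : Config) : Prop :=
  (∀ v : C.V, 2 ≤ C.w v) ∧
  (∀ v : C.V, C.adjw v ≤ 3) ∧
  (∀ u v : C.V, 1 < C.adjw u → 1 < C.adjw v → u = v) ∧
  (∀ v x : C.V, 1 < C.adjw v → C.IsBad x → C.adjw x = 1 → C.graph.Adj x v) ∧
  ((∃ v : C.V, C.adjw v = 3) →
     ∀ u u' : C.V, C.graph.Adj u u' → C.adjw u = 1 → C.adjw u' = 1 → False) ∧
  (∀ u v x : C.V, C.graph.Adj u v → C.adjw u = 1 → C.adjw v = 1 →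
     C.IsBad x → C.adjw x = 2 → C.graph.Adj x u ∨ C.graph.Adj x v) ∧
  (∀ p ∈ forbiddenPatterns, ¬ C.HasPattern p) ∧
  ((∃ x : C.V, C.IsBad x) → ∃ p ∈ badPatterns, ∃ m v, C.IsBadPartChain p m v)

end Config

/-- The standard inner product on `ℤ^N`. -/
def dot {N : ℕ} (x y : Fin N → ℤ) : ℤ := ∑ i, x i * y i

/-- The support of a vector of `ℤ^N` with respect to the standard orthonormal basis. -/
def supp {N : ℕ} (x : Fin N → ℤ) : Finset (Fin N) :=
  Finset.univ.filter fun i => x i ≠ 0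

namespace Config

/-- An embedding of a configuration into `ℤ^N`. -/
def IsEmbedding (C : Config) (N : ℕ) (φ : C.V → Fin N → ℤ) : Prop :=
  ∀ u v : C.V, dot (φ u) (φ v) =
    if u = v then C.w u else if C.graph.Adj u v then -1 else 0

/-- The restriction of `φ` to `S` is standard. -/
def IsStandardOn (C : Config) (N : ℕ) (φ : C.V → Fin N → ℤ) (S : Set C.V) : Prop :=
  ∀ u ∈ S, ∀ v ∈ S,
    ((supp (φ u) ∩ supp (φ v)).card : ℤ) =
      if u = v then C.w v else if C.graph.Adj u v then 1 else 0

/-- A standard embedding. -/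
def IsStandard (C : Config) (N : ℕ) (φ : C.V → Fin N → ℤ) : Prop :=
  C.IsStandardOn N φ Set.univ

/-- The restriction of `φ` to `S` is semi-standard at `x`. -/
def IsSemiStandardAtOn (C : Config) (N : ℕ) (φ : C.V → Fin N → ℤ) (x : C.V)
    (S : Set C.V) : Prop :=
  (∀ u ∈ S, ∀ v ∈ S,
    ((supp (φ u) ∩ supp (φ v)).card : ℤ) =
      if u = v then C.w v
      else if C.graph.Adj u v then 1
      else if C.graph.Adj x u ∧ C.graph.Adj x v then 2
      else 0) ∧
  (∀ u ∈ S, ∀ v ∈ S, u ≠ v → C.graph.Adj x u → C.graph.Adj x v →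
    (supp (φ u) ∩ supp (φ x) ∩ supp (φ v)).card = 1)

/-- A semi-standard embedding: semi-standard at some bad vertex. -/
def IsSemiStandard (C : Config) (N : ℕ) (φ : C.V → Fin N → ℤ) : Prop :=
  ∃ x : C.V, C.IsBad x ∧ C.IsSemiStandardAtOn N φ x Set.univ

/-- A candidate for the extended bad part: a chain containing the bad part whose two
ends are either leaves or preceded by two consecutive vertices of vanishing adjusted
weight. -/
def IsEBPCand (C : Config) (m : ℕ) (v : ℕ → C.V) : Prop :=
  C.IsChain m v ∧
  (∀ p ∈ badPatterns, ∀ mb vb, C.IsBadPartChain p mb vb →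
     ∀ i ≤ mb, ∃ j ≤ m, v j = vb i) ∧
  (C.IsLeaf (v 0) ∨ (2 ≤ m ∧ C.adjw (v 1) = 0 ∧ C.adjw (v 2) = 0)) ∧
  (C.IsLeaf (v m) ∨ (2 ≤ m ∧ C.adjw (v (m - 1)) = 0 ∧ C.adjw (v (m - 2)) = 0))

/-- The extended bad part: a candidate with the fewest vertices. -/
def IsExtBadPart (C : Config) (m : ℕ) (v : ℕ → C.V) : Prop :=
  C.IsEBPCand m v ∧ ∀ m' v', C.IsEBPCand m' v' → m ≤ m'

/-- The set of vertices of the chain `v 0, …, v m`. -/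
def ebpSet (C : Config) (m : ℕ) (v : ℕ → C.V) : Set C.V := {y | ∃ i ≤ m, v i = y}

/-- The outside part of `Γ` relative to the extended bad part `v 0, …, v m`. -/
def OutsidePart (C : Config) (m : ℕ) (v : ℕ → C.V) : Set C.V :=
  {x | ∀ i ≤ m, v i ≠ x}
  ∪ {x | ¬ C.IsLeaf (v 0) ∧ (x = v 0 ∨ x = v 1 ∨ x = v 2)}
  ∪ {x | ¬ C.IsLeaf (v m) ∧ (x = v m ∨ x = v (m - 1) ∨ x = v (m - 2))}

/-- A screw at the front end of the extended bad part. -/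
def IsFrontScrew (C : Config) (N : ℕ) (φ : C.V → Fin N → ℤ) (m : ℕ) (v : ℕ → C.V)
    (e : Fin N) : Prop :=
  ¬ C.IsLeaf (v 0) ∧ 3 ≤ m ∧ φ (v 2) e ≠ 0 ∧ φ (v 3) e ≠ 0

/-- A screw at the back end of the extended bad part. -/
def IsBackScrew (C : Config) (N : ℕ) (φ : C.V → Fin N → ℤ) (m : ℕ) (v : ℕ → C.V)
    (e : Fin N) : Prop :=
  ¬ C.IsLeaf (v m) ∧ 3 ≤ m ∧ φ (v (m - 2)) e ≠ 0 ∧ φ (v (m - 3)) e ≠ 0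

/-- All screws of `Γ` (with respect to `φ`) are clean. -/
def AllScrewsClean (C : Config) (N : ℕ) (φ : C.V → Fin N → ℤ) (m : ℕ)
    (v : ℕ → C.V) : Prop :=
  (∀ e : Fin N, C.IsFrontScrew N φ m v e →
    ∀ u : C.V, u ≠ v 2 → u ≠ v 3 → φ u e = 0) ∧
  (∀ e : Fin N, C.IsBackScrew N φ m v e →
    ∀ u : C.V, u ≠ v (m - 2) → u ≠ v (m - 3) → φ u e = 0)

end Config

/-!
Group the coordinates according to the values, up to a common sign, which the images of the vertices
of a subconfiguration take there. Only the sizes of the groups matter, and adding a vertex splits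
the groups subject to one equation for each scalar product, so that the embeddings of a small
subconfiguration fall into finitely many explicit types. For two distinct vertices, a finite search
through these types adds a missing neighbour of an explored vertex again and again, and drops what
the Working Conditions exclude. It shows that the supports of the two images meet as in a standard
embedding, or else in two coordinates, the two vertices having a common bad neighbour (a centre)
whose support contains one of these coordinates. The pairs are treated by increasing total weight,
so that the search may use the result for lighter pairs.

There is at most one centre. Two centres would be adjacent or have a common neighbour of weight `3`;
in both cases counting coordinates in the support between them makes the supports of their outer
neighbours meet, although these outer neighbours are too far apart for that.
-/

/-! ### Paths in acyclic graphs -/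

section Chains

variable {V : Type*} {G : SimpleGraph V} {a b c d : V} {l : List V}

theorem head?_eq_of_isAcyclic_of_isChain (hG : G.IsAcyclic)
    (hchain : (a :: l).IsChain G.Adj) (hnodup : (a :: l).Nodup) (hab : G.Adj a b) (hb : b ∈ l) :
    l.head? = some b := by
  obtain _ | ⟨c, l⟩ := l
  · simp at hb
  let w := SimpleGraph.Walk.ofSupport (a :: c :: l) (List.cons_ne_nil _ _) hchain
  have hsupp : w.support = a :: c :: l := SimpleGraph.Walk.support_ofSupport _ hchain
  have hpath : w.IsPath := by rwa [SimpleGraph.Walk.isPath_def, hsupp]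
  have hsnd : b = w.snd :=
    hG.eq_snd_of_adj_start hpath hab (by rw [hsupp]; exact List.mem_cons_of_mem a hb)
  have hlength : 1 ≤ w.length := by
    rw [SimpleGraph.Walk.length_ofSupport, List.length_cons, List.length_cons]
    lia
  have hget : some w.snd = w.support[1]? := w.getVert_eq_support_getElem? hlength
  rw [hsnd, hget, hsupp, List.head?_cons, List.getElem?_cons_succ, List.getElem?_cons_zero]

theorem isChain_and_nodup_cons (hG : G.IsAcyclic)
    (h : (a :: l).IsChain G.Adj ∧ (a :: l).Nodup) (hab : G.Adj a b) (hb : l.head? ≠ some b) :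
    (b :: a :: l).IsChain G.Adj ∧ (b :: a :: l).Nodup := by
  have hmem : b ∉ a :: l :=
    List.not_mem_cons_of_ne_of_not_mem hab.ne' <|
      mt (head?_eq_of_isAcyclic_of_isChain hG h.1 h.2 hab) hb
  exact ⟨List.isChain_cons_cons.2 ⟨hab.symm, h.1⟩, List.nodup_cons.2 ⟨hmem, h.2⟩⟩

theorem isChain_and_nodup_reverse (h : l.IsChain G.Adj ∧ l.Nodup) :
    l.reverse.IsChain G.Adj ∧ l.reverse.Nodup :=
  ⟨List.isChain_reverse.2 (h.1.imp fun _ _ => SimpleGraph.Adj.symm), List.nodup_reverse.2 h.2⟩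

theorem not_adj_and_not_exists_adj_of_isChain (hG : G.IsAcyclic)
    (h : (a :: c :: d :: l).IsChain G.Adj ∧ (a :: c :: d :: l).Nodup) (hb : b ∈ l) :
    ¬ G.Adj a b ∧ ¬ ∃ z, G.Adj z a ∧ G.Adj z b := by
  have hne : b ≠ a ∧ b ≠ c ∧ b ≠ d := by
    refine ⟨?_, ?_, ?_⟩ <;> rintro rfl <;> simp [hb] at h
  refine ⟨fun hab => hne.2.1.symm ?_, fun ⟨z, hza, hzb⟩ => ?_⟩
  · simpa using head?_eq_of_isAcyclic_of_isChain hG h.1 h.2 hab (by simp [hb])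
  · by_cases hzc : z = c
    · subst hzc
      refine hne.2.2.symm ?_
      simpa using head?_eq_of_isAcyclic_of_isChain hG h.1.tail h.2.of_cons hzb (by simp [hb])
    · have h := isChain_and_nodup_cons hG h hza.symm (by simpa using Ne.symm hzc)
      refine hne.1.symm ?_
      simpa using head?_eq_of_isAcyclic_of_isChain hG h.1 h.2 hzb (by simp [hb])

end Chains

section PathSystems

variable {V : Type*} {G : SimpleGraph V}

/-- The vertices of an induced subgraph, cut into the paths which are its components. -/
structure IsPathSystem (G : SimpleGraph V) (ps : List (List V)) : Prop where
  isChain : ∀ p ∈ ps, p.IsChain G.Adj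
  nodup : ps.flatten.Nodup
  separated : ps.Pairwise fun p q => ∀ a ∈ p, ∀ b ∈ q, ¬ G.Adj a b

namespace IsPathSystem

variable {ps qs : List (List V)} {p q t t' : List V} {u y z b : V}

theorem perm (h : IsPathSystem G ps) (hperm : ps.Perm qs) : IsPathSystem G qs where
  isChain p hp := h.isChain p (hperm.mem_iff.2 hp)
  nodup := hperm.flatten.nodup_iff.1 h.nodup
  separated := (hperm.pairwise_iff fun hpq a ha b hb hab => hpq b hb a ha hab.symm).1 h.separated

theorem reverse (h : IsPathSystem G (p :: ps)) : IsPathSystem G (p.reverse :: ps) where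
  isChain := by
    have := h.isChain
    simp only [List.forall_mem_cons] at this ⊢
    exact ⟨List.isChain_reverse.2 (this.1.imp fun _ _ => SimpleGraph.Adj.symm), this.2⟩
  nodup := by
    refine List.Perm.nodup_iff ?_ |>.1 h.nodup
    exact (List.reverse_perm p).symm.append_right _
  separated := by simpa using h.separated

theorem of_cons (h : IsPathSystem G (p :: ps)) : IsPathSystem G ps where
  isChain q hq := h.isChain q (List.mem_cons_of_mem p hq)
  nodup := (List.nodup_append.1 h.nodup).2.1
  separated := (List.pairwise_cons.1 h.separated).2

theorem cons_head (h : IsPathSystem G ((u :: t) :: ps)) (hy : y ∉ ((u :: t) :: ps).flatten)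
    (hyu : G.Adj y u) (hadj : ∀ b ∈ ps.flatten, ¬ G.Adj y b) :
    IsPathSystem G ((y :: u :: t) :: ps) where
  isChain := by
    have := h.isChain
    simp only [List.forall_mem_cons] at this ⊢
    exact ⟨this.1.cons_cons hyu, this.2⟩
  nodup := by simpa using ⟨by simpa using hy, by simpa using h.nodup⟩
  separated := by
    have := h.separated
    simp only [List.pairwise_cons] at this ⊢
    refine ⟨fun q hq a ha b hb => ?_, this.2⟩
    obtain rfl | ha := List.mem_cons.1 ha
    · exact hadj b (List.mem_flatten_of_mem hq hb)
    · exact this.1 q hq a ha b hb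

theorem join (h : IsPathSystem G ((u :: t) :: (z :: t') :: ps))
    (hy : y ∉ ((u :: t) :: (z :: t') :: ps).flatten) (hyu : G.Adj y u) (hyz : G.Adj y z)
    (hadj : ∀ b ∈ ps.flatten, ¬ G.Adj y b) :
    IsPathSystem G (((u :: t).reverse ++ y :: z :: t') :: ps) where
  isChain := by
    have := h.isChain
    simp only [List.forall_mem_cons] at this ⊢
    refine ⟨List.IsChain.append ?_ (this.2.1.cons_cons hyz) ?_, this.2.2⟩
    · exact List.isChain_reverse.2 (this.1.imp fun _ _ => SimpleGraph.Adj.symm)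
    · simpa using hyu.symm
  nodup := by
    refine (List.Perm.nodup_iff ?_).1 (List.nodup_cons.2 ⟨hy, h.nodup⟩)
    simp only [List.flatten_cons, List.append_assoc, List.cons_append]
    exact List.perm_middle.symm.trans
      ((List.reverse_perm (u :: t)).symm.append_right (y :: z :: (t' ++ ps.flatten)))
  separated := by
    have := h.separated
    simp only [List.pairwise_cons, List.mem_cons, forall_eq_or_imp] at this ⊢
    refine ⟨fun q hq a ha b hb => ?_, this.2.2⟩
    simp only [List.mem_append, List.mem_reverse, List.mem_cons] at ha
    obtain ha | rfl | ha := ha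
    · exact by grind
    · exact hadj b (List.mem_flatten_of_mem hq hb)
    · exact by grind

theorem head?_eq_of_adj (hG : G.IsAcyclic) (h : IsPathSystem G ((u :: t) :: ps))
    (hb : b ∈ ((u :: t) :: ps).flatten) (hub : G.Adj u b) : t.head? = some b := by
  have hsep := (List.pairwise_cons.1 h.separated).1
  rw [List.flatten_cons, List.mem_append, List.mem_cons] at hb
  obtain (rfl | hb) | hb := hb
  · exact absurd hub G.irrefl
  · exact head?_eq_of_isAcyclic_of_isChain hG (h.isChain _ (by simp))
      (List.nodup_append.1 h.nodup).1 hub hb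
  · obtain ⟨q, hq, hb⟩ := List.mem_flatten.1 hb
    exact absurd hub (hsep q hq u (by simp) b hb)

end IsPathSystem

end PathSystems

/-! ### Degrees and bad vertices -/

namespace Config

variable {C : Config} {u v x y z : C.V}

section Degree

theorem deg_pos (h : C.graph.Adj x u) : 0 < C.deg x :=
  (Set.ncard_pos (Set.toFinite _)).2 ⟨u, h⟩

theorem two_le_deg (huv : u ≠ v) (hu : C.graph.Adj x u) (hv : C.graph.Adj x v) : 2 ≤ C.deg x := by
  rw [← Set.ncard_pair huv]
  exact Set.ncard_le_ncard (Set.insert_subset hu (Set.singleton_subset_iff.2 hv)) (Set.toFinite _)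

theorem exists_adj_of_deg_pos (h : 0 < C.deg x) : ∃ u, C.graph.Adj x u :=
  Set.nonempty_of_ncard_ne_zero h.ne'

theorem exists_adj_ne_of_two_le_deg (h : 2 ≤ C.deg x) (v : C.V) : ∃ u, u ≠ v ∧ C.graph.Adj x u := by
  obtain ⟨u, hu, huv⟩ := Set.exists_ne_of_one_lt_ncard h v
  exact ⟨u, huv, hu⟩

theorem IsLinear.eq_or_eq_of_adj (hlin : C.IsLinear) (huv : u ≠ v) (hu : C.graph.Adj x u)
    (hv : C.graph.Adj x v) (hz : C.graph.Adj x z) : z = u ∨ z = v := by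
  by_contra! hne
  have hsub : ({u, v, z} : Set C.V) ⊆ C.graph.neighborSet x := by
    rintro y (rfl | rfl | rfl) <;> assumption
  have hcard : ({u, v, z} : Set C.V).ncard = 3 :=
    Set.ncard_eq_three.2 ⟨u, v, z, huv, hne.1.symm, hne.2.symm, rfl⟩
  have hle := Set.ncard_le_ncard hsub (Set.toFinite _)
  have hdeg := hlin.1 x
  unfold deg at hdeg
  lia

theorem IsBad.deg_eq_two (hlin : C.IsLinear) (hx : C.IsBad x) : C.deg x = 2 := by
  obtain ⟨u, v, huv, hu, hv, -, -⟩ := hx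
  exact le_antisymm (hlin.1 x) (two_le_deg huv hu hv)

theorem IsBad.adjw_pos_of_adj (hlin : C.IsLinear) (hx : C.IsBad x) (hz : C.graph.Adj x z) :
    0 < C.adjw z := by
  obtain ⟨u, v, huv, hu, hv, hu0, hv0⟩ := hx
  obtain rfl | rfl := hlin.eq_or_eq_of_adj huv hu hv hz <;> assumption

end Degree

section BadPart

theorem badPatterns_flagged_close : ∀ p ∈ badPatterns, ∀ i j : Fin p.length, i < j →
    (p.get i).2 = true → (p.get j).2 = true → (j : ℕ) = i + 1 ∨
      ∃ k : Fin p.length, (k : ℕ) = i + 1 ∧ (j : ℕ) = k + 1 ∧ (p.get k).1 = 1 := by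
  decide

theorem badPatterns_flagged_interior : ∀ p ∈ badPatterns, ∀ i : Fin p.length,
    (p.get i).2 = true → 0 < (i : ℕ) ∧ (i : ℕ) + 1 < p.length ∧ (p.get i).1 ≠ 3 := by
  decide

theorem badPatterns_ne_three : ∀ p ∈ badPatterns, ∀ i j : Fin p.length, i ≠ j →
    (p.get i).2 = true → (p.get j).2 = true → ∀ k : Fin p.length, (p.get k).1 ≠ 3 := by
  decide

theorem WorkingConditions.adj_or_exists_adj_of_isBad (hwc : C.WorkingConditions) (hx : C.IsBad x)
    (hy : C.IsBad y) (hxy : x ≠ y) :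
    C.graph.Adj x y ∨ ∃ z, C.graph.Adj x z ∧ C.graph.Adj y z ∧ C.adjw z = 1 := by
  obtain ⟨p, hp, m, v, ⟨-, hadj⟩, hm, hw, hbad⟩ := hwc.2.2.2.2.2.2.2 ⟨x, hx⟩
  have key : ∀ i j : Fin p.length, i < j → (p.get i).2 = true → (p.get j).2 = true →
      C.graph.Adj (v i) (v j) ∨
        ∃ z, C.graph.Adj (v i) z ∧ C.graph.Adj (v j) z ∧ C.adjw z = 1 := by
    intro i j hij hi hj
    obtain h | ⟨k, hk, hjk, hk1⟩ := badPatterns_flagged_close p hp i j hij hi hj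
    · exact .inl (h ▸ hadj i (by lia))
    · exact .inr ⟨v k, hk ▸ hadj i (by lia), (hjk ▸ hadj k (by lia)).symm, (hw k).trans hk1⟩
  obtain ⟨i, hi, rfl⟩ := (hbad x).1 hx
  obtain ⟨j, hj, rfl⟩ := (hbad y).1 hy
  obtain h | h | h := lt_trichotomy i j
  · exact key i j h hi hj
  · exact absurd (h ▸ rfl) hxy
  · exact (key j i h hj hi).imp SimpleGraph.Adj.symm fun ⟨z, h₁, h₂, h₃⟩ => ⟨z, h₂, h₁, h₃⟩

theorem WorkingConditions.adjw_ne_three_of_isBad (hwc : C.WorkingConditions) (hx : C.IsBad x) :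
    C.adjw x ≠ 3 := by
  obtain ⟨p, hp, m, v, -, -, hw, hbad⟩ := hwc.2.2.2.2.2.2.2 ⟨x, hx⟩
  obtain ⟨i, hi, rfl⟩ := (hbad x).1 hx
  exact hw i ▸ (badPatterns_flagged_interior p hp i hi).2.2

theorem WorkingConditions.adjw_ne_three_of_adj_isBad (hwc : C.WorkingConditions)
    (hlin : C.IsLinear) (hx : C.IsBad x) (hy : C.IsBad y) (hxy : x ≠ y) (hxz : C.graph.Adj x z) :
    C.adjw z ≠ 3 := by
  obtain ⟨p, hp, m, v, ⟨hinj, hadj⟩, hm, hw, hbad⟩ := hwc.2.2.2.2.2.2.2 ⟨x, hx⟩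
  obtain ⟨i, hi, rfl⟩ := (hbad x).1 hx
  obtain ⟨j, hj, rfl⟩ := (hbad y).1 hy
  obtain ⟨hpos, hlast, -⟩ := badPatterns_flagged_interior p hp i hi
  have hthree : ∀ k < p.length, C.adjw (v k) ≠ 3 := fun k hk =>
    hw ⟨k, hk⟩ ▸ badPatterns_ne_three p hp i j (fun h => hxy (h ▸ rfl)) hi hj ⟨k, hk⟩
  obtain ⟨n, hn⟩ := Nat.exists_eq_add_one.2 hpos
  have hprev : C.graph.Adj (v i) (v n) := (hn ▸ hadj n (by lia)).symm
  have hne : v n ≠ v (i + 1) := fun h => by have := hinj n (by lia) _ (by lia) h; lia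
  obtain rfl | rfl := hlin.eq_or_eq_of_adj hne hprev (hadj i (by lia)) hxz <;>
    exact hthree _ (by lia)

end BadPart
end Config

/-! ### A search for partial embeddings -/

namespace Search

/-- The adjusted weight (`excess`) and the degree of a vertex. -/
structure Kind where
  excess : ℕ
  degree : ℕ

/-- The weight of a vertex of the given kind. -/
def Kind.weight (k : Kind) : ℕ := k.excess + k.degree

/-- A vertex met by the search; `index` is its position in the order of discovery. -/
structure Vertex extends Kind where
  index : ℕ

/-- A class of `mult` coordinates on which the vectors of the explored vertices `0, …, n - 1` take
the same values up to a common sign: these values are the digits, in base `16`, of `±code`, and the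
`i`-th bit of `mask` tells whether vertex `i` is nonzero there. -/
structure Block where
  code : ℕ
  mask : ℕ
  mult : ℕ

/-- A partial embedding: `size` explored vertices, arranged in paths, together with their values
on the union of their supports. -/
structure State where
  size : ℕ
  paths : List (List Vertex)
  blocks : List Block

/-- The number of coordinates whose mask satisfies `p`. Plain recursors are used here and in the
next few definitions because the kernel evaluates them faster than compiled recursion. -/
def mass (p : ℕ → Bool) (gs : List Block) : ℕ :=
  gs.rec 0 fun g _ s => bif p g.mask then g.mult + s else s

/-- The number of coordinates in the supports of both vertices `i` and `j`. -/
def share (gs : List Block) (i j : ℕ) : ℕ := mass (fun m => m.testBit i && m.testBit j) gs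

/-- Adds a block to a list, unless the block is empty. -/
def consBlock (g : Block) (gs : List Block) : List Block := bif g.mult.beq 0 then gs else g :: gs

/-- Splits a block according to the values of vertex `n`: it agrees in sign with `code` on `a`
coordinates, disagrees on `b` coordinates and vanishes on the other ones. -/
def Block.refine (g : Block) (n a b : ℕ) (gs : List Block) : List Block :=
  consBlock ⟨16 * g.code + 1, g.mask ||| 2 ^ n, a⟩
    (consBlock ⟨16 * g.code - 1, g.mask ||| 2 ^ n, b⟩
      (consBlock ⟨16 * g.code, g.mask, g.mult - a - b⟩ gs))

/-- Whether `p` holds on `{0, …, m}`. -/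
def allLE (m : ℕ) (p : ℕ → Bool) : Bool := m.rec (p 0) fun i ih => p (i + 1) && ih

/-- Whether a block meets a vertex of the set `frozen`, on which the new vertex must vanish. -/
def Block.isFrozen (g : Block) (frozen : ℕ) : Bool := !(g.mask &&& frozen).beq 0

/-- The largest code of a block which is not frozen. -/
def maxCode (frozen : ℕ) (gs : List Block) : ℕ :=
  gs.rec 0 fun g _ B => bif g.isFrozen frozen || g.code.ble B then B else g.code

/-- Whether `k` accepts every way to add vertex `n` with `r` nonzero entries, all equal to `±1`
and outside the frozen blocks, such that `x` plus the codes met with agreeing signs equals `y` plus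
the codes met with disagreeing signs. This equation combines all the scalar products of the new
vertex with the old ones. -/
def allSplits (n frozen : ℕ) (gs : List Block) : ℕ → ℕ → ℕ → (List Block → Bool) → Bool :=
  gs.rec (fun r x y k => !x.beq y || k (consBlock ⟨1, 2 ^ n, r⟩ []))
    fun g gs ih r x y k =>
      !x.ble (y + r * maxCode frozen (g :: gs)) || !y.ble (x + r * maxCode frozen (g :: gs)) ||
        bif g.isFrozen frozen then ih r x y fun l => k (⟨16 * g.code, g.mask, g.mult⟩ :: l)
        else
          let m := bif r.ble g.mult then r else g.mult
          allLE m fun a => allLE (m - a) fun b =>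
            ih (r - a - b) (x + a * g.code) (y + b * g.code) fun l => k (g.refine n a b l)

/-- The pairs of consecutive vertices. -/
def edges (ps : List (List Vertex)) : List (Vertex × Vertex) := ps.flatMap fun p => p.zip p.tail

/-- The triples of consecutive vertices. -/
def triples (ps : List (List Vertex)) : List (Vertex × Vertex × Vertex) :=
  ps.flatMap fun p => p.zip (p.tail.zip p.tail.tail)

/-- Whether the middle vertex of a triple of consecutive vertices is bad. -/
def isBadTriple (t : Vertex × Vertex × Vertex) : Bool :=
  Nat.blt 0 t.1.excess && Nat.blt 0 t.2.2.excess

/-- Whether a list of adjusted weights starts with one of the chains forbidden by Working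
Condition VI, read from its end of adjusted weight greater than `1`. -/
def startsForbidden : List ℕ → Bool
  | 2 :: 0 :: 0 :: 1 :: _ => true
  | 3 :: 0 :: 0 :: 1 :: _ => true
  | 3 :: 0 :: 0 :: 0 :: 1 :: _ => true
  | 2 :: 1 :: 0 :: 0 :: 1 :: 1 :: _ => true
  | 3 :: 1 :: 0 :: 0 :: 1 :: _ => true
  | 2 :: 1 :: 0 :: 1 :: _ => true
  | 3 :: 1 :: 0 :: 1 :: _ => true
  | 2 :: 0 :: 1 :: 1 :: _ => true
  | 2 :: 1 :: 1 :: 0 :: 1 :: 1 :: _ => true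
  | _ => false

/-- Whether the part of a path from its heavy vertex on starts with a forbidden chain. -/
def isForbidden (p : List Vertex) : Bool :=
  startsForbidden ((p.map (·.excess)).dropWhile (Nat.ble · 1))

/-- Whether `v` is an end of the triple `t`. -/
def isEnd (v : Vertex) (t : Vertex × Vertex × Vertex) : Bool :=
  v.index.beq t.1.index || v.index.beq t.2.2.index

/-- Working Conditions III–VI for the explored vertices, given a vertex `h`. -/
def admissibleAt (ps : List (List Vertex)) (h : Vertex) : Bool :=
  h.excess.ble 1 ||
    let ones := (edges ps).filter fun e => e.1.excess.beq 1 && e.2.excess.beq 1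
    (!h.excess.beq 3 || ones.isEmpty) &&
      ps.all (fun p => !isForbidden p && !isForbidden p.reverse) &&
      ((triples ps).filter isBadTriple).all fun t => !t.2.1.excess.beq 3 &&
        (!t.2.1.excess.beq 1 || isEnd h t) &&
        (!t.2.1.excess.beq 2 || ones.all fun e => isEnd e.1 t || isEnd e.2 t)

/-- The consequences of Working Condition VII for a pair of bad vertices. -/
def compatible (s t : Vertex × Vertex × Vertex) : Bool :=
  s.2.1.index.beq t.2.1.index || (!s.1.excess.beq 3 && !s.2.2.excess.beq 3 &&
    (isEnd t.2.1 s || (s.1.excess.beq 1 && isEnd s.1 t) || (s.2.2.excess.beq 1 && isEnd s.2.2 t)))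

/-- Necessary conditions, drawn from the Working Conditions, on the explored vertices. -/
def admissible (ps : List (List Vertex)) : Bool :=
  ps.flatten.all (admissibleAt ps) &&
    ((triples ps).filter isBadTriple).all fun s =>
      ((triples ps).filter isBadTriple).all (compatible s)

/-- Whether the supports of vertex `v` and of vertex `n`, whose neighbours are `A`, meet as they
should. -/
def meetsWell (gs : List Block) (n : ℕ) (A : List ℕ) (v : Vertex) : Bool :=
  bif A.any v.index.beq then (share gs v.index n).beq 1
  else (share gs v.index n).beq 0 || (share gs v.index n).beq 2

/-- The set of the given vertices, as a bitmask. -/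
def bitmask (vs : List Vertex) : ℕ := vs.rec 0 fun v _ m => m ||| 2 ^ v.index

/-- Whether `cont` accepts all states which extend `st` by a vertex of kind `k`, where `ps` are the
new paths and `A` lists the neighbours of the new vertex. The vertices whose weight is less than
`s - k.weight` are known to meet the new one well. -/
def addVertex (s : ℕ) (st : State) (k : Kind) (ps : List (List Vertex)) (A : List ℕ)
    (cont : State → Bool) : Bool :=
  !admissible ps ||
    let known := st.paths.flatten.filter fun v => (v.weight + k.weight).blt s
    let frozen := bitmask (known.filter fun v =>
      !A.any v.index.beq && (v.excess.beq 0 || k.excess.beq 0))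
    allSplits st.size frozen st.blocks k.weight (A.map fun i => 16 ^ (st.size - 1 - i)).sum 0
      fun gs => !known.all (meetsWell gs st.size A) || cont ⟨st.size + 1, ps, gs⟩

/-- An end `head` of a path `head :: tail`, and the list of the other paths. -/
structure OpenEnd where
  head : Vertex
  tail : List Vertex
  rest : List (List Vertex)

/-- The two ways to read a path. -/
def orientations : List Vertex → List (List Vertex)
  | [v] => [[v]]
  | p => [p, p.reverse]

/-- The head of a path, if it has an unexplored neighbour. -/
def openHead (rest : List (List Vertex)) : List Vertex → Option OpenEnd
  | [] => none
  | [v] => bif Nat.blt 0 v.degree then some ⟨v, [], rest⟩ else none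
  | v :: u :: p => bif Nat.blt 1 v.degree then some ⟨v, u :: p, rest⟩ else none

/-- The ways to single out an element of a list. -/
def picks {α : Type} : List α → List (α × List α)
  | [] => []
  | a :: l => (a, l) :: (picks l).map fun x => (x.1, a :: x.2)

/-- The ends of the paths which have an unexplored neighbour. -/
def openEnds (ps : List (List Vertex)) : List OpenEnd :=
  (picks ps).flatMap fun x => (orientations x.1).filterMap (openHead x.2)

/-- The kinds of vertices with neighbours and adjusted weight at most `1`. -/
def lightKinds : List Kind := [⟨1, 1⟩, ⟨0, 2⟩, ⟨1, 2⟩]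

/-- The kinds of vertices with neighbours and adjusted weight at least `2`. -/
def heavyKinds : List Kind := [⟨2, 1⟩, ⟨3, 1⟩, ⟨2, 2⟩, ⟨3, 2⟩]

/-- The possible kinds of an unexplored neighbour of an explored vertex. -/
def newKinds (ps : List (List Vertex)) : List Kind :=
  bif ps.flatten.any (Nat.blt 1 ·.excess) then lightKinds else lightKinds ++ heavyKinds

/-- Whether `cont` accepts all the states which extend `st` by a neighbour of the open end `e`: the
neighbour either prolongs the path of `e` or joins it to another path. -/
def allExtensions (s : ℕ) (st : State) (e : OpenEnd) (cont : State → Bool) : Bool :=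
  (newKinds st.paths).all fun k =>
    let x : Vertex := ⟨k, st.size⟩
    addVertex s st k ((x :: e.head :: e.tail) :: e.rest) [e.head.index] cont &&
      (k.degree.beq 1 || (openEnds e.rest).all fun e' =>
        addVertex s st k (((e.head :: e.tail).reverse ++ x :: e'.head :: e'.tail) :: e'.rest)
          [e.head.index, e'.head.index] cont)

/-- Open ends with few private coordinates come first, then those discovered early. -/
def priority (gs : List Block) (e : OpenEnd) : ℕ :=
  mass (Nat.beq · (2 ^ e.head.index)) gs * 16 + e.head.index

/-- Whether, after at most `fuel` steps of exploration from `st`, `accept` holds for all partial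
embeddings. -/
def refutes (s : ℕ) (accept : State → Bool) : ℕ → State → Bool
  | 0, st => accept st
  | fuel + 1, st => accept st ||
      match (openEnds st.paths).argmin (priority st.blocks) with
      | none => false
      | some e => allExtensions s st e (refutes s accept fuel)

/-- Vertices `0` and `1` meet as adjacent vertices should. -/
def acceptAdj (st : State) : Bool := (share st.blocks 0 1).beq 1

/-- Vertices `0` and `1` are the ends of the bad triple `t`, and meet once on its middle vertex. -/
def isCentreTriple (gs : List Block) (t : Vertex × Vertex × Vertex) : Bool :=
  isBadTriple t && (t.1.index.beq 0 && t.2.2.index.beq 1 || t.1.index.beq 1 && t.2.2.index.beq 0) &&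
    (mass (fun m => m.testBit 0 && m.testBit t.2.1.index && m.testBit 1) gs).beq 1

/-- Vertices `0` and `1` meet as vertices at distance at least `2` should. -/
def acceptFar (st : State) : Bool :=
  (share st.blocks 0 1).beq 0 ||
    ((share st.blocks 0 1).beq 2 && (triples st.paths).any (isCentreTriple st.blocks))

/-- The partial embedding of a single vertex with entries in `{0, ±1}`. -/
def single (k : Kind) : State := ⟨1, [[⟨k, 0⟩]], [⟨1, 1, k.weight⟩]⟩

/-- Starting from two vertices of the given kinds, the search shows that they meet as they
should. -/
def checkPair (k l : Kind) : Bool :=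
  (Nat.blt 1 k.excess && Nat.blt 1 l.excess) ||
    (addVertex (k.weight + l.weight) (single k) l [[⟨l, 1⟩], [⟨k, 0⟩]] []
        (refutes (k.weight + l.weight) acceptFar 9) &&
      (k.degree.beq 0 || l.degree.beq 0 ||
        addVertex (k.weight + l.weight) (single k) l [[⟨l, 1⟩, ⟨k, 0⟩]] [0]
          (refutes (k.weight + l.weight) acceptAdj 9)))

/-- All the kinds of vertices allowed by the Working Conditions. -/
def allKinds : List Kind := ⟨2, 0⟩ :: ⟨3, 0⟩ :: (lightKinds ++ heavyKinds)

/-- The partial embedding of a single vertex of weight `5` with an entry `±2`. -/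
def doubled : State := ⟨1, [[⟨⟨3, 2⟩, 0⟩]], [⟨2, 1, 1⟩, ⟨1, 1, 1⟩]⟩

end Search

/-! ### Blocks of coordinates -/

open Finset

namespace Search

section Blocks

variable {ι : Type*} {q y : ι → ℤ} {μ : ι → ℕ} {n : ℕ} {e : ι} {gs : List Block} {U S : Finset ι}

theorem Block.isFrozen_eq_true {g : Block} {frozen : ℕ} :
    g.isFrozen frozen = true ↔ g.mask &&& frozen ≠ 0 := by
  rw [isFrozen, Bool.not_eq_true', Bool.eq_false_iff, ne_eq, Nat.beq_eq]

/-- The codes after appending the digit `y`. -/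
def appendCode (q y : ι → ℤ) (e : ι) : ℤ := 16 * q e + y e

/-- The masks after setting the `n`-th bit where `y` does not vanish. -/
def appendMask (μ : ι → ℕ) (n : ℕ) (y : ι → ℤ) (e : ι) : ℕ :=
  if y e = 0 then μ e else μ e ||| 2 ^ n

theorem abs_appendCode_of_mul_pos (hy : |y e| ≤ 1) (h : 0 < q e * y e) :
    |appendCode q y e| = 16 * |q e| + 1 := by
  obtain ⟨hq, hy'⟩ | ⟨hq, hy'⟩ := mul_pos_iff.1 h <;> rw [abs_le] at hy
  · rw [appendCode, abs_of_pos hq, abs_of_pos (by lia)]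
    lia
  · rw [appendCode, abs_of_neg hq, abs_of_neg (by lia)]
    lia

theorem abs_appendCode_of_mul_neg (hy : |y e| ≤ 1) (h : q e * y e < 0) :
    |appendCode q y e| = 16 * |q e| - 1 := by
  obtain ⟨hq, hy'⟩ | ⟨hq, hy'⟩ := mul_neg_iff.1 h <;> rw [abs_le] at hy
  · rw [appendCode, abs_of_pos hq, abs_of_pos (by lia)]
    lia
  · rw [appendCode, abs_of_neg hq, abs_of_neg (by lia)]
    lia

theorem appendMask_of_mul_ne_zero (h : q e * y e ≠ 0) : appendMask μ n y e = μ e ||| 2 ^ n :=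
  if_neg (right_ne_zero_of_mul h)

theorem sum_mul_eq_of_abs_eq {c : ℕ} (hc : ∀ e ∈ S, |q e| = c) (hy : ∀ e, |y e| ≤ 1) :
    ∑ e ∈ S, q e * y e = #{e ∈ S | 0 < q e * y e} * c - #{e ∈ S | q e * y e < 0} * c := by
  have hterm : ∀ e ∈ S, q e * y e =
      (if 0 < q e * y e then (c : ℤ) else 0) - if q e * y e < 0 then (c : ℤ) else 0 := by
    intro e he
    rw [← hc e he]
    obtain h | h | h : y e = -1 ∨ y e = 0 ∨ y e = 1 := by
      have := abs_le.1 (hy e)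
      lia
    all_goals
      rw [h]
      obtain h | h | h := lt_trichotomy (q e) 0 <;> simp [h, abs_of_neg, abs_of_pos, h.not_gt]
  rw [sum_congr rfl hterm, sum_sub_distrib, ← sum_filter, ← sum_filter]
  simp

theorem card_filter_pos_add_card_filter_neg (hq : ∀ e ∈ S, q e ≠ 0) :
    #{e ∈ S | 0 < q e * y e} + #{e ∈ S | q e * y e < 0} = #{e ∈ S | y e ≠ 0} := by
  classical
  rw [← card_union_of_disjoint (disjoint_filter.2 fun e _ h₁ h₂ => h₁.not_gt h₂), ← filter_or]
  refine congrArg card (filter_congr fun e he => ?_)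
  rw [or_comm, lt_or_lt_iff_ne, mul_ne_zero_iff_left (hq e he)]

variable [DecidableEq ι]

/-- The blocks `gs` describe the coordinates in `U`, where `q` and `μ` are the code and the mask of
each coordinate: the coordinates outside all the blocks have code and mask `0`. -/
def Fits (q : ι → ℤ) (μ : ι → ℕ) : List Block → Finset ι → Prop
  | [], U => ∀ e ∈ U, q e = 0 ∧ μ e = 0
  | g :: gs, U => 0 < g.code ∧ ∃ S ⊆ U, #S = g.mult ∧
      (∀ e ∈ S, |q e| = g.code ∧ μ e = g.mask) ∧ Fits q μ gs (U \ S)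

theorem mass_cons (p : ℕ → Bool) (g : Block) (gs : List Block) :
    mass p (g :: gs) = bif p g.mask then g.mult + mass p gs else mass p gs := rfl

theorem Fits.mass_eq {p : ℕ → Bool} (hp : p 0 = false) (h : Fits q μ gs U) :
    mass p gs = #{e ∈ U | p (μ e)} := by
  induction gs generalizing U with
  | nil =>
    refine (card_eq_zero.2 (filter_eq_empty_iff.2 fun e he => ?_)).symm
    simp [(h e he).2, hp]
  | cons g gs ih =>
    obtain ⟨-, S, hS, hcard, hg, h⟩ := h
    have hsplit : #{e ∈ U | p (μ e)} = #{e ∈ S | p (μ e)} + #{e ∈ U \ S | p (μ e)} := by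
      rw [← card_union_of_disjoint (disjoint_filter_filter disjoint_sdiff), ← filter_union,
        union_sdiff_of_subset hS]
    have hmask : {e ∈ S | p (μ e)} = {_e ∈ S | p g.mask} :=
      filter_congr fun _ he => by rw [(hg _ he).2]
    rw [mass_cons, hsplit, hmask, ← ih h, ← hcard]
    cases hpg : p g.mask <;> simp

theorem Fits.abs_le_maxCode {frozen : ℕ} (h : Fits q μ gs U) {e : ι} (he : e ∈ U)
    (hfree : μ e &&& frozen = 0) : |q e| ≤ maxCode frozen gs := by
  induction gs generalizing U with
  | nil => simp [(h e he).1, maxCode]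
  | cons g gs ih =>
    obtain ⟨-, S, -, -, hg, h⟩ := h
    have hcons : maxCode frozen (g :: gs) = bif g.isFrozen frozen || g.code.ble (maxCode frozen gs)
      then maxCode frozen gs else g.code := rfl
    have htail : maxCode frozen gs ≤ maxCode frozen (g :: gs) := by
      rw [hcons, Bool.cond_eq_ite]
      split_ifs with hc
      · rfl
      · simp only [Bool.or_eq_true, Nat.ble_eq, not_or] at hc
        exact (not_le.1 hc.2).le
    by_cases heS : e ∈ S
    · rw [(hg e heS).1, Nat.cast_le, hcons, Bool.cond_eq_ite]
      have : ¬ g.isFrozen frozen = true := by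
        rwa [Block.isFrozen_eq_true, not_not, ← (hg e heS).2]
      split_ifs with hc
      · simpa [this] using hc
      · rfl
    · exact (ih h (mem_sdiff.2 ⟨he, heS⟩)).trans (by exact_mod_cast htail)

theorem Fits.consBlock {g : Block} (hcode : 0 < g.code) (hS : S ⊆ U) (hcard : #S = g.mult)
    (hg : ∀ e ∈ S, |q e| = g.code ∧ μ e = g.mask) (h : Fits q μ gs (U \ S)) :
    Fits q μ (consBlock g gs) U := by
  rw [Search.consBlock, Bool.cond_eq_ite]
  split_ifs with hzero
  · have : S = ∅ := card_eq_zero.1 (hcard.trans (Nat.eq_of_beq_eq_true hzero))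
    simpa [this] using h
  · exact ⟨hcode, S, hS, hcard, hg, h⟩

theorem Fits.refine {g : Block} (hcode : 0 < g.code) (hS : S ⊆ U) (hcard : #S = g.mult)
    (hg : ∀ e ∈ S, |q e| = g.code ∧ μ e = g.mask) (hy : ∀ e, |y e| ≤ 1)
    (h : Fits (appendCode q y) (appendMask μ n y) gs (U \ S)) :
    Fits (appendCode q y) (appendMask μ n y)
      (g.refine n #{e ∈ S | 0 < q e * y e} #{e ∈ S | q e * y e < 0} gs) U := by
  set A := {e ∈ S | 0 < q e * y e}
  set B := {e ∈ S | q e * y e < 0}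
  have hdisj : Disjoint A B := disjoint_filter.2 fun e _ hA hB => hA.not_gt hB
  have hA : A ⊆ S := filter_subset _ _
  have hB : B ⊆ S := filter_subset _ _
  have hrest : ((U \ A) \ B) \ (S \ (A ∪ B)) = U \ S := by
    ext e
    have := @hA e
    have := @hB e
    simp only [mem_sdiff, mem_union]
    tauto
  refine .consBlock (by simp) (hA.trans hS) rfl (fun e he => ?_) <|
    .consBlock (S := B) (by simp only; lia) ?_ rfl (fun e he => ?_) <|
    .consBlock (S := S \ (A ∪ B)) (by simp only; lia) ?_ ?_ (fun e he => ?_) (hrest.symm ▸ h)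
  · obtain ⟨heS, hpos⟩ := mem_filter.1 he
    refine ⟨?_, by rw [appendMask_of_mul_ne_zero hpos.ne', (hg e heS).2]⟩
    rw [abs_appendCode_of_mul_pos (hy e) hpos, (hg e heS).1]
    push_cast
    rfl
  · exact fun e he => mem_sdiff.2 ⟨hS (hB he), disjoint_right.1 hdisj he⟩
  · obtain ⟨heS, hneg⟩ := mem_filter.1 he
    refine ⟨?_, by rw [appendMask_of_mul_ne_zero hneg.ne, (hg e heS).2]⟩
    rw [abs_appendCode_of_mul_neg (hy e) hneg, (hg e heS).1]
    push_cast [show 1 ≤ 16 * g.code by lia]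
    rfl
  · rw [sdiff_sdiff_left]
    exact sdiff_subset_sdiff hS subset_rfl
  · rw [card_sdiff_of_subset (union_subset hA hB), card_union_of_disjoint hdisj, hcard]
    exact (Nat.sub_sub _ _ _).symm
  · obtain ⟨heS, hAB⟩ := mem_sdiff.1 he
    have hmul : q e * y e = 0 := by
      simp only [A, B, mem_union, mem_filter, heS, true_and] at hAB
      lia
    have hq : q e ≠ 0 := abs_pos.1 (by rw [(hg e heS).1]; exact_mod_cast hcode)
    simp [appendCode, appendMask, (mul_eq_zero.1 hmul).resolve_left hq, abs_mul, hg e heS]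

theorem allLE_eq_true {m : ℕ} {p : ℕ → Bool} : allLE m p = true ↔ ∀ i ≤ m, p i = true := by
  induction m with
  | zero => simp [allLE]
  | succ m ih =>
    have : allLE (m + 1) p = (p (m + 1) && allLE m p) := rfl
    simp only [this, Bool.and_eq_true, ih, Nat.le_succ_iff, or_imp, forall_and, forall_eq, and_comm]

theorem Fits.abs_sum_le {frozen : ℕ} (h : Fits q μ gs U) (hy : ∀ e, |y e| ≤ 1)
    (hfrozen : ∀ e ∈ U, μ e &&& frozen ≠ 0 → y e = 0) :
    |∑ e ∈ U, q e * y e| ≤ #{e ∈ U | y e ≠ 0} * maxCode frozen gs := by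
  rw [← nsmul_eq_mul, ← sum_filter_of_ne (p := fun e => y e ≠ 0)
    fun e _ he => right_ne_zero_of_mul he]
  refine (abs_sum_le_sum_abs _ _).trans (sum_le_card_nsmul _ _ _ fun e he => ?_)
  obtain ⟨heU, hye⟩ := mem_filter.1 he
  have hfree : μ e &&& frozen = 0 := by_contra fun hne => hye (hfrozen e heU hne)
  rw [abs_mul]
  nlinarith [h.abs_le_maxCode heU hfree, hy e, abs_nonneg (q e), abs_nonneg (y e)]

theorem allSplits_cons {g : Block} {frozen r X Y : ℕ} {k : List Block → Bool}
    (hk : allSplits n frozen (g :: gs) r X Y k = true)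
    (hX : X ≤ Y + r * maxCode frozen (g :: gs)) (hY : Y ≤ X + r * maxCode frozen (g :: gs)) :
    (g.isFrozen frozen = true →
      allSplits n frozen gs r X Y (fun l => k (⟨16 * g.code, g.mask, g.mult⟩ :: l)) = true) ∧
    (g.isFrozen frozen = false → ∀ a b, a + b ≤ r → a + b ≤ g.mult →
      allSplits n frozen gs (r - a - b) (X + a * g.code) (Y + b * g.code)
        (fun l => k (g.refine n a b l)) = true) := by
  rw [allSplits] at hk
  dsimp only at hk
  rw [Nat.ble_eq_true_of_le hX, Nat.ble_eq_true_of_le hY] at hk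
  refine ⟨fun hg => ?_, fun hg a b hr hm => ?_⟩ <;> rw [hg] at hk
  · exact hk
  · simp only [Bool.not_true, Bool.false_or, cond_false] at hk
    have hmin : a + b ≤ bif r.ble g.mult then r else g.mult := by
      cases r.ble g.mult <;> assumption
    exact allLE_eq_true.1 (allLE_eq_true.1 hk a (by lia)) b (by lia)

theorem exists_fits_of_allSplits_nil {frozen : ℕ} (hy : ∀ e, |y e| ≤ 1) {r X Y : ℕ}
    {k : List Block → Bool} (hk : allSplits n frozen [] r X Y k = true) (h : Fits q μ [] U)
    (hr : #{e ∈ U | y e ≠ 0} = r) (hXY : X + ∑ e ∈ U, q e * y e = Y) :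
    ∃ gs', Fits (appendCode q y) (appendMask μ n y) gs' U ∧ k gs' = true := by
  have hsum : ∑ e ∈ U, q e * y e = 0 := sum_eq_zero fun e he => by rw [(h e he).1, zero_mul]
  have hX : X = Y := by simpa [hsum] using hXY
  refine ⟨_, .consBlock (S := {e ∈ U | y e ≠ 0}) one_pos (filter_subset _ _) hr (fun e he => ?_)
    (fun e he => ?_), by simpa [allSplits, hX] using hk⟩
  · obtain ⟨heU, hye⟩ := mem_filter.1 he
    obtain ⟨hq, hμ⟩ := h e heU
    have hpos : 0 < |y e| := abs_pos.2 hye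
    have := hy e
    simp only [appendCode, appendMask, hq, hμ, hye, mul_zero, zero_add, if_false, Nat.zero_or,
      Nat.cast_one, and_true]
    lia
  · obtain ⟨heU, hye⟩ := mem_sdiff.1 he
    have hye : y e = 0 := by simpa [heU] using hye
    simp [appendCode, appendMask, hye, h e heU]

theorem exists_fits_of_allSplits {frozen : ℕ} (hy : ∀ e, |y e| ≤ 1) {r X Y : ℕ}
    {k : List Block → Bool} (hk : allSplits n frozen gs r X Y k = true) (h : Fits q μ gs U)
    (hfrozen : ∀ e ∈ U, μ e &&& frozen ≠ 0 → y e = 0) (hr : #{e ∈ U | y e ≠ 0} = r)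
    (hXY : X + ∑ e ∈ U, q e * y e = Y) :
    ∃ gs', Fits (appendCode q y) (appendMask μ n y) gs' U ∧ k gs' = true := by
  induction gs generalizing U r X Y k with
  | nil => exact exists_fits_of_allSplits_nil hy hk h hr hXY
  | cons g gs ih =>
    have hle := abs_le.1 (h.abs_sum_le hy hfrozen)
    rw [hr] at hle
    obtain ⟨hkfrozen, hkfree⟩ := allSplits_cons hk (by lia) (by lia)
    obtain ⟨hcode, S, hS, hcard, hg, h⟩ := h
    have hfrozen' : ∀ e ∈ U \ S, μ e &&& frozen ≠ 0 → y e = 0 :=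
      fun e he => hfrozen e (sdiff_subset he)
    have hsum := sum_sdiff (f := fun e => q e * y e) hS
    have hsupp : #{e ∈ U \ S | y e ≠ 0} + #{e ∈ S | y e ≠ 0} = r := by
      rw [← hr, ← card_union_of_disjoint (disjoint_filter_filter sdiff_disjoint), ← filter_union,
        sdiff_union_of_subset hS]
    cases hgf : g.isFrozen frozen
    · have hq : ∀ e ∈ S, q e ≠ 0 := fun e he =>
        abs_pos.1 (by rw [(hg e he).1]; exact_mod_cast hcode)
      have hsigns := card_filter_pos_add_card_filter_neg (y := y) hq
      have hmult : #{e ∈ S | y e ≠ 0} ≤ g.mult := hcard ▸ card_filter_le _ _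
      rw [sum_mul_eq_of_abs_eq (fun e he => (hg e he).1) hy] at hsum
      obtain ⟨gs', h', hk'⟩ := ih (hkfree hgf #{e ∈ S | 0 < q e * y e} #{e ∈ S | q e * y e < 0}
        (by lia) (by lia)) h hfrozen' (by lia) (by push_cast; lia)
      exact ⟨_, h'.refine hcode hS hcard hg hy, hk'⟩
    · have hzero : ∀ e ∈ S, y e = 0 := fun e he =>
        hfrozen e (hS he) ((hg e he).2 ▸ Block.isFrozen_eq_true.1 hgf)
      rw [filter_eq_empty_iff.2 fun e he => not_not.2 (hzero e he), card_empty] at hsupp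
      rw [sum_eq_zero (s := S) fun e he => by rw [hzero e he, mul_zero]] at hsum
      obtain ⟨gs', h', hk'⟩ := ih (hkfrozen hgf) h hfrozen' hsupp (by lia)
      refine ⟨⟨16 * g.code, g.mask, g.mult⟩ :: gs',
        ⟨by simpa using hcode, S, hS, hcard, fun e he => ?_, h'⟩, hk'⟩
      simp [appendCode, appendMask, hzero e he, abs_mul, hg e he]

end Blocks
end Search

namespace Search

section Codes

variable {N n i j k : ℕ} {v w : ℕ → Fin N → ℤ} {e : Fin N} {gs : List Block}

/-- The values of `v 0, …, v (n - 1)` at a coordinate, as the digits in base `16` of a number. -/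
def code (v : ℕ → Fin N → ℤ) : ℕ → Fin N → ℤ
  | 0 => 0
  | n + 1 => appendCode (code v n) (v n)

/-- The set of the `i < n` such that `v i` is nonzero at a coordinate, as a bitmask. -/
def mask (v : ℕ → Fin N → ℤ) : ℕ → Fin N → ℕ
  | 0 => 0
  | n + 1 => appendMask (mask v n) n (v n)

theorem code_congr (h : ∀ i < n, v i = w i) : code v n = code w n := by
  induction n with
  | zero => rfl
  | succ n ih => rw [code, code, ih fun i hi => h i (by lia), h n (by lia)]

theorem mask_congr (h : ∀ i < n, v i = w i) : mask v n = mask w n := by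
  induction n with
  | zero => rfl
  | succ n ih => rw [mask, mask, ih fun i hi => h i (by lia), h n (by lia)]

theorem testBit_mask : (mask v n e).testBit i = true ↔ i < n ∧ v i e ≠ 0 := by
  induction n with
  | zero => simp [mask]
  | succ n ih =>
    rw [mask, appendMask, Nat.lt_succ_iff_lt_or_eq, or_and_right, ← ih]
    split_ifs with h
    · simp only [iff_self_or]
      rintro ⟨rfl, hi⟩
      exact absurd h hi
    · rw [Nat.testBit_or, Nat.testBit_two_pow, Bool.or_eq_true, decide_eq_true_eq]
      refine or_congr_right ⟨?_, fun hi => hi.1.symm⟩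
      rintro rfl
      exact ⟨rfl, h⟩

theorem sum_code_mul (y : Fin N → ℤ) :
    ∑ e, code v n e * y e = ∑ i ∈ range n, 16 ^ (n - 1 - i) * dot (v i) y := by
  induction n with
  | zero => simp [code]
  | succ n ih =>
    have hterm : ∀ e, code v (n + 1) e * y e = 16 * (code v n e * y e) + v n e * y e :=
      fun e => by rw [code, appendCode]; ring
    rw [sum_congr rfl fun e _ => hterm e, sum_add_distrib, ← mul_sum, ih, sum_range_succ, mul_sum]
    congr 1
    · refine sum_congr rfl fun i hi => ?_
      have : n + 1 - 1 - i = n - 1 - i + 1 := by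
        have := mem_range.1 hi
        lia
      rw [this, pow_succ]
      ring
    · simp [dot]

theorem mem_supp {x : Fin N → ℤ} : e ∈ supp x ↔ x e ≠ 0 := by simp [supp]

theorem Fits.share_eq (h : Fits (code v n) (mask v n) gs univ) (hi : i < n) (hj : j < n) :
    share gs i j = #(supp (v i) ∩ supp (v j)) := by
  rw [share, h.mass_eq (by simp)]
  congr 1
  ext e
  simp [testBit_mask, hi, hj, mem_supp]

theorem Fits.mass_eq_card_inter (h : Fits (code v n) (mask v n) gs univ) (hi : i < n) (hj : j < n)
    (hk : k < n) : mass (fun m => m.testBit i && m.testBit k && m.testBit j) gs =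
      #(supp (v i) ∩ supp (v k) ∩ supp (v j)) := by
  rw [h.mass_eq (by simp)]
  congr 1
  ext e
  simp [testBit_mask, hi, hj, hk, mem_supp, and_assoc]

end Codes
end Search

/-! ### Consequences of the Working Conditions -/

section Consecutive

variable {α : Type*} {a b c : α} {l : List α}

theorem pair_infix_of_mem_zip_tail (h : (a, b) ∈ l.zip l.tail) : [a, b] <:+: l := by
  induction l with
  | nil => simp at h
  | cons x l ih =>
    obtain _ | ⟨y, l⟩ := l
    · simp at h
    · obtain h | h := List.mem_cons.1 h
      · obtain ⟨rfl, rfl⟩ := Prod.mk.inj h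
        exact (List.prefix_append [a, b] l).isInfix
      · exact (ih h).trans (List.suffix_cons x (y :: l)).isInfix

theorem triple_infix_of_mem_zip_zip_tail (h : (a, b, c) ∈ l.zip (l.tail.zip l.tail.tail)) :
    [a, b, c] <:+: l := by
  induction l with
  | nil => simp at h
  | cons x l ih =>
    obtain _ | ⟨y, _ | ⟨z, l⟩⟩ := l
    · simp at h
    · simp at h
    · obtain h | h := List.mem_cons.1 h
      · obtain ⟨rfl, rfl, rfl⟩ := by simpa using h
        exact (List.prefix_append [a, b, c] l).isInfix
      · exact (ih h).trans (List.suffix_cons x (y :: z :: l)).isInfix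

end Consecutive

namespace Config

variable {C : Config}

theorem hasPattern_of_isChain {l : List C.V} (hne : l ≠ []) (hchain : l.IsChain C.graph.Adj)
    (hnodup : l.Nodup) : C.HasPattern (l.map C.adjw) := by
  have hlength := List.length_pos_iff.2 hne
  have hget : ∀ i, (hi : i < l.length) → l[i]?.getD (l.head hne) = l[i] := fun i hi => by
    rw [List.getElem?_eq_getElem hi, Option.getD_some]
  refine ⟨l.length - 1, fun i => l[i]?.getD (l.head hne), ⟨fun i hi j hj hij => ?_, fun i hi => ?_⟩,
    by rw [List.length_map]; lia, fun i => ?_⟩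
  · dsimp only at hij
    rw [hget i (by lia), hget j (by lia)] at hij
    exact (hnodup.getElem_inj_iff).1 hij
  · dsimp only
    rw [hget i (by lia), hget (i + 1) (by lia)]
    exact hchain.getElem i (by lia)
  · have hi : (i : ℕ) < l.length := by simpa using i.2
    simp [hget i hi]

theorem WorkingConditions.map_adjw_notMem_forbiddenPatterns (hwc : C.WorkingConditions)
    {l : List C.V} (hchain : l.IsChain C.graph.Adj) (hnodup : l.Nodup) :
    l.map C.adjw ∉ forbiddenPatterns := by
  intro hmem
  refine hwc.2.2.2.2.2.2.1 _ hmem (hasPattern_of_isChain ?_ hchain hnodup)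
  rintro rfl
  simp [forbiddenPatterns] at hmem

end Config

namespace Search

variable {C : Config} {x : ℕ → C.V} {ps : List (List Vertex)} {p : List Vertex}
  {u v y h : Vertex} {s t : Vertex × Vertex × Vertex}

/-- `ps` lists the components of a subconfiguration, with the right adjusted weights and degrees,
when the vertex of index `i` stands for `x i`. -/
structure Charts (C : Config) (x : ℕ → C.V) (ps : List (List Vertex)) : Prop where
  excess : ∀ v ∈ ps.flatten, C.adjw (x v.index) = v.excess
  degree : ∀ v ∈ ps.flatten, C.deg (x v.index) = v.degree
  isPathSystem : IsPathSystem C.graph (ps.map (List.map fun v => x v.index))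

namespace Charts

theorem isChain (hc : Charts C x ps) (hp : p ∈ ps) :
    (p.map fun v => x v.index).IsChain C.graph.Adj :=
  hc.isPathSystem.isChain _ (List.mem_map_of_mem hp)

theorem nodup_flatten (hc : Charts C x ps) : (ps.flatten.map fun v => x v.index).Nodup := by
  rw [List.map_flatten]
  exact hc.isPathSystem.nodup

theorem nodup (hc : Charts C x ps) (hp : p ∈ ps) : (p.map fun v => x v.index).Nodup :=
  hc.nodup_flatten.sublist ((List.sublist_flatten_of_mem hp).map _)

theorem eq_of_apply_index_eq (hc : Charts C x ps) (hu : u ∈ ps.flatten) (hv : v ∈ ps.flatten)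
    (huv : x u.index = x v.index) : u = v :=
  List.inj_on_of_nodup_map hc.nodup_flatten hu hv huv

theorem of_mem_edges (hc : Charts C x ps) (h : (u, v) ∈ edges ps) :
    u ∈ ps.flatten ∧ v ∈ ps.flatten ∧ C.graph.Adj (x u.index) (x v.index) := by
  obtain ⟨p, hp, hmem⟩ := List.mem_flatMap.1 h
  have hinfix := pair_infix_of_mem_zip_tail hmem
  refine ⟨List.mem_flatten_of_mem hp (hinfix.subset (by simp)),
    List.mem_flatten_of_mem hp (hinfix.subset (by simp)), ?_⟩
  simpa using (hc.isChain hp).infix (hinfix.map _)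

theorem of_mem_triples (hc : Charts C x ps) (h : (u, y, v) ∈ triples ps) :
    (u ∈ ps.flatten ∧ y ∈ ps.flatten ∧ v ∈ ps.flatten) ∧ x u.index ≠ x v.index ∧
      C.graph.Adj (x y.index) (x u.index) ∧ C.graph.Adj (x y.index) (x v.index) := by
  obtain ⟨p, hp, hmem⟩ := List.mem_flatMap.1 h
  have hinfix := triple_infix_of_mem_zip_zip_tail hmem
  have hflat : ∀ z ∈ [u, y, v], z ∈ ps.flatten := fun z hz =>
    List.mem_flatten_of_mem hp (hinfix.subset hz)
  have hchain := (hc.isChain hp).infix (hinfix.map _)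
  have hnodup := (hc.nodup hp).sublist (hinfix.map _).sublist
  simp only [List.map_cons, List.map_nil, List.nodup_cons, List.mem_cons, List.not_mem_nil,
    List.isChain_cons_cons, not_or] at hnodup hchain
  exact ⟨⟨hflat u (by simp), hflat y (by simp), hflat v (by simp)⟩, hnodup.1.2.1, hchain.1.symm,
    hchain.2.1⟩

theorem isBad (hc : Charts C x ps) (ht : t ∈ (triples ps).filter isBadTriple) :
    C.IsBad (x t.2.1.index) := by
  obtain ⟨hmem, hbad⟩ := List.mem_filter.1 ht
  obtain ⟨⟨hu, -, hv⟩, hne, hadju, hadjv⟩ := hc.of_mem_triples hmem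
  rw [isBadTriple, Bool.and_eq_true, Nat.blt_eq, Nat.blt_eq] at hbad
  refine ⟨_, _, hne, hadju, hadjv, ?_, ?_⟩
  · rw [hc.excess _ hu]
    lia
  · rw [hc.excess _ hv]
    lia

theorem isEnd_of_adj (hlin : C.IsLinear) (hc : Charts C x ps) (ht : t ∈ triples ps)
    (hv : v ∈ ps.flatten) (hadj : C.graph.Adj (x t.2.1.index) (x v.index)) : isEnd v t = true := by
  obtain ⟨⟨hu, -, hw⟩, hne, hadju, hadjw⟩ := hc.of_mem_triples ht
  simp only [isEnd, Bool.or_eq_true, Nat.beq_eq]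
  exact (hlin.eq_or_eq_of_adj hne hadju hadjw hadj).imp
    (fun h => congrArg _ (hc.eq_of_apply_index_eq hv hu h))
    (fun h => congrArg _ (hc.eq_of_apply_index_eq hv hw h))

end Charts

theorem exists_prefix_of_startsForbidden {l : List ℕ} (h : startsForbidden l = true) :
    ∃ l', l' <+: l ∧ (l'.map Nat.cast ∈ forbiddenPatterns ∨
      (l'.map Nat.cast).reverse ∈ forbiddenPatterns) := by
  suffices ∃ k, (l.take k).map Nat.cast ∈ forbiddenPatterns ∨
      ((l.take k).map Nat.cast).reverse ∈ forbiddenPatterns from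
    this.imp' (l.take ·) fun k hk => ⟨List.take_prefix k l, hk⟩
  unfold startsForbidden at h
  split at h
  case h_10 => exact absurd h Bool.false_ne_true
  all_goals
    first
    | (refine ⟨4, ?_⟩; simp [forbiddenPatterns]; done)
    | (refine ⟨5, ?_⟩; simp [forbiddenPatterns]; done)
    | (refine ⟨6, ?_⟩; simp [forbiddenPatterns])

theorem isForbidden_eq_false (hwc : C.WorkingConditions) {p : List Vertex}
    (hexcess : ∀ v ∈ p, C.adjw (x v.index) = v.excess)
    (hchain : (p.map fun v => x v.index).IsChain C.graph.Adj)
    (hnodup : (p.map fun v => x v.index).Nodup) : isForbidden p = false := by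
  refine Bool.eq_false_iff.2 fun h => ?_
  obtain ⟨l, hl, hforb⟩ := exists_prefix_of_startsForbidden h
  have hinfix : l <:+: p.map (·.excess) := hl.isInfix.trans (List.dropWhile_suffix _).isInfix
  obtain ⟨q, hq, rfl⟩ := List.infix_map_iff.1 hinfix
  have hmap : (q.map (·.excess)).map Nat.cast = (q.map fun v => x v.index).map C.adjw := by
    simp only [List.map_map]
    exact List.map_congr_left fun v hv => (hexcess v (hq.subset hv)).symm
  have hchain' := hchain.infix (hq.map fun v => x v.index)
  have hnodup' := hnodup.sublist (hq.map fun v => x v.index).sublist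
  rw [hmap, ← List.map_reverse] at hforb
  refine hforb.elim (hwc.map_adjw_notMem_forbiddenPatterns hchain' hnodup')
    (hwc.map_adjw_notMem_forbiddenPatterns ?_ (List.nodup_reverse.2 hnodup'))
  exact List.isChain_reverse.2 (hchain'.imp fun _ _ => SimpleGraph.Adj.symm)

namespace Charts

theorem isForbidden_eq_false (hwc : C.WorkingConditions) (hc : Charts C x ps) (hp : p ∈ ps) :
    isForbidden p = false ∧ isForbidden p.reverse = false := by
  have hexcess : ∀ v ∈ p, C.adjw (x v.index) = v.excess := fun v hv =>
    hc.excess v (List.mem_flatten_of_mem hp hv)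
  refine ⟨Search.isForbidden_eq_false hwc hexcess (hc.isChain hp) (hc.nodup hp),
    Search.isForbidden_eq_false hwc (by simpa using hexcess) ?_ ?_⟩
  · rw [List.map_reverse, List.isChain_reverse]
    exact (hc.isChain hp).imp fun _ _ => SimpleGraph.Adj.symm
  · rw [List.map_reverse]
    exact List.nodup_reverse.2 (hc.nodup hp)

theorem admissibleAt_eq_true (hlin : C.IsLinear) (hwc : C.WorkingConditions) (hc : Charts C x ps)
    (hh : h ∈ ps.flatten) : admissibleAt ps h = true := by
  have hexcess := hc.excess
  rw [admissibleAt, Bool.or_eq_true, or_iff_not_imp_left, Nat.ble_eq, not_le]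
  intro hheavy
  have hones : ∀ e ∈ (edges ps).filter fun e => e.1.excess.beq 1 && e.2.excess.beq 1,
      e.1 ∈ ps.flatten ∧ e.2 ∈ ps.flatten ∧ C.graph.Adj (x e.1.index) (x e.2.index) ∧
        C.adjw (x e.1.index) = 1 ∧ C.adjw (x e.2.index) = 1 := by
    intro e he
    obtain ⟨hmem, he⟩ := List.mem_filter.1 he
    rw [Bool.and_eq_true, Nat.beq_eq, Nat.beq_eq] at he
    obtain ⟨hu, hv, hadj⟩ := hc.of_mem_edges hmem
    exact ⟨hu, hv, hadj, by rw [hexcess _ hu, he.1, Nat.cast_one],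
      by rw [hexcess _ hv, he.2, Nat.cast_one]⟩
  simp only [Bool.and_eq_true, Bool.or_eq_true, Bool.not_eq_true', Bool.eq_false_iff, ne_eq,
    Nat.beq_eq, List.all_eq_true, List.isEmpty_iff, ← imp_iff_not_or]
  refine ⟨⟨fun h3 => ?_, fun p hp => ?_⟩, fun t ht => ⟨⟨?_, fun h1 => ?_⟩, fun h2 e he => ?_⟩⟩
  · refine List.eq_nil_iff_forall_not_mem.2 fun e he => ?_
    obtain ⟨-, -, hadj, hu, hv⟩ := hones e he
    exact hwc.2.2.2.2.1 ⟨x h.index, by rw [hexcess h hh, h3]; rfl⟩ _ _ hadj hu hv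
  · exact (hc.isForbidden_eq_false hwc hp).imp Bool.eq_false_iff.1 Bool.eq_false_iff.1
  all_goals
    have hmem := (List.mem_filter.1 ht).1
    have hmid := (hc.of_mem_triples hmem).1.2.1
    have hbad := hc.isBad ht
  · exact fun h3 => hwc.adjw_ne_three_of_isBad hbad (by rw [hexcess _ hmid, h3]; rfl)
  · refine hc.isEnd_of_adj hlin hmem hh (hwc.2.2.2.1 _ _ ?_ hbad ?_)
    · rw [hexcess h hh]
      lia
    · rw [hexcess _ hmid, h1, Nat.cast_one]
  · obtain ⟨hu, hv, hadj, hu1, hv1⟩ := hones e he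
    exact (hwc.2.2.2.2.2.1 _ _ _ hadj hu1 hv1 hbad (by rw [hexcess _ hmid, h2]; rfl)).imp
      (hc.isEnd_of_adj hlin hmem hu) (hc.isEnd_of_adj hlin hmem hv)

theorem compatible_eq_true (hlin : C.IsLinear) (hwc : C.WorkingConditions) (hc : Charts C x ps)
    (hs : s ∈ (triples ps).filter isBadTriple) (ht : t ∈ (triples ps).filter isBadTriple) :
    compatible s t = true := by
  have hs' := (List.mem_filter.1 hs).1
  have ht' := (List.mem_filter.1 ht).1
  obtain ⟨⟨hu, hys, hv⟩, hne, hadju, hadjv⟩ := hc.of_mem_triples hs'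
  have hyt := (hc.of_mem_triples ht').1.2.1
  rw [compatible, Bool.or_eq_true, or_iff_not_imp_left, Nat.beq_eq]
  intro hst
  have hst' : x s.2.1.index ≠ x t.2.1.index := fun h =>
    hst (congrArg _ (hc.eq_of_apply_index_eq hys hyt h))
  have hthree : ∀ z ∈ ps.flatten, C.graph.Adj (x s.2.1.index) (x z.index) → z.excess ≠ 3 :=
    fun z hz hadj h3 => hwc.adjw_ne_three_of_adj_isBad hlin (hc.isBad hs) (hc.isBad ht) hst' hadj
      (by rw [hc.excess z hz, h3]; rfl)
  simp only [Bool.and_eq_true, Bool.or_eq_true, Bool.not_eq_true', Bool.eq_false_iff, ne_eq,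
    Nat.beq_eq]
  refine ⟨⟨hthree _ hu hadju, hthree _ hv hadjv⟩, ?_⟩
  obtain hadj | ⟨z, hsz, htz, hz⟩ := hwc.adj_or_exists_adj_of_isBad (hc.isBad hs) (hc.isBad ht) hst'
  · exact .inl (.inl (hc.isEnd_of_adj hlin hs' hyt hadj))
  · obtain rfl | rfl := hlin.eq_or_eq_of_adj hne hadju hadjv hsz
    · rw [hc.excess _ hu] at hz
      exact .inl (.inr ⟨by exact_mod_cast hz, hc.isEnd_of_adj hlin ht' hu htz⟩)
    · rw [hc.excess _ hv] at hz
      exact .inr ⟨by exact_mod_cast hz, hc.isEnd_of_adj hlin ht' hv htz⟩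

theorem admissible_eq_true (hlin : C.IsLinear) (hwc : C.WorkingConditions) (hc : Charts C x ps) :
    admissible ps = true := by
  rw [admissible, Bool.and_eq_true, List.all_eq_true, List.all_eq_true]
  refine ⟨fun h hh => hc.admissibleAt_eq_true hlin hwc hh, fun s hs => ?_⟩
  exact List.all_eq_true.2 fun t ht => hc.compatible_eq_true hlin hwc hs ht

end Charts

end Search

/-! ### Partial embeddings tracked by states -/

theorem inter_supp_eq_empty_iff {N : ℕ} {a b : Fin N → ℤ} :
    supp a ∩ supp b = ∅ ↔ ∀ e, a e ≠ 0 → b e = 0 := by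
  simp [Finset.eq_empty_iff_forall_notMem, supp]

theorem card_supp_eq_dot {N : ℕ} {a : Fin N → ℤ} (ha : ∀ e, |a e| ≤ 1) :
    (#(supp a) : ℤ) = dot a a := by
  rw [supp, card_filter, Nat.cast_sum, dot]
  refine sum_congr rfl fun e _ => ?_
  obtain h | h | h := Int.abs_le_one_iff.1 (ha e) <;> simp [h]

namespace Config

variable {C : Config} {N : ℕ} {φ : C.V → Fin N → ℤ} {u v x : C.V}

/-- The supports of the images of the distinct vertices `u` and `v` meet as in a standard or
semi-standard embedding, the vertex at which it would be semi-standard depending on `u` and `v`. -/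
def MeetsProperly (C : Config) (φ : C.V → Fin N → ℤ) (u v : C.V) : Prop :=
  (C.graph.Adj u v → #(supp (φ u) ∩ supp (φ v)) = 1) ∧
    (¬ C.graph.Adj u v → #(supp (φ u) ∩ supp (φ v)) = 0 ∨
      ∃ x, C.IsBad x ∧ C.graph.Adj x u ∧ C.graph.Adj x v ∧ #(supp (φ u) ∩ supp (φ v)) = 2 ∧
        #(supp (φ u) ∩ supp (φ x) ∩ supp (φ v)) = 1)

theorem MeetsProperly.symm (h : C.MeetsProperly φ u v) : C.MeetsProperly φ v u := by
  refine ⟨fun hadj => inter_comm _ (supp (φ u)) ▸ h.1 hadj.symm, fun hadj => ?_⟩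
  obtain h0 | ⟨x, hx, hu, hv, h2, h1⟩ := h.2 fun hadj' => hadj hadj'.symm
  · exact .inl (inter_comm _ (supp (φ u)) ▸ h0)
  · refine .inr ⟨x, hx, hv, hu, inter_comm _ (supp (φ u)) ▸ h2, ?_⟩
    rwa [inter_right_comm, inter_comm (supp (φ v)), inter_right_comm]

theorem MeetsProperly.inter_supp_eq_empty (h : C.MeetsProperly φ u v) (hlin : C.IsLinear)
    (hadj : ¬ C.graph.Adj u v) (h0 : C.adjw u = 0 ∨ C.adjw v = 0) :
    supp (φ u) ∩ supp (φ v) = ∅ := by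
  obtain h | ⟨x, hx, hu, hv, -⟩ := h.2 hadj
  · exact card_eq_zero.1 h
  · have := hx.adjw_pos_of_adj hlin hu
    have := hx.adjw_pos_of_adj hlin hv
    lia

theorem w_eq_adjw_add_deg (C : Config) (v : C.V) : C.w v = C.adjw v + C.deg v := by
  rw [adjw, sub_add_cancel]

end Config

namespace Search

variable {C : Config} {N : ℕ} {φ : C.V → Fin N → ℤ} {x x' : ℕ → C.V} {y : C.V} {st : State}
  {ps : List (List Vertex)} {A : List ℕ} {v : Vertex}

theorem exists_testBit_of_and_bitmask_ne_zero {m : ℕ} {vs : List Vertex}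
    (h : m &&& bitmask vs ≠ 0) : ∃ v ∈ vs, m.testBit v.index = true := by
  induction vs with
  | nil => exact absurd (Nat.and_zero m) h
  | cons u vs ih =>
    change m &&& (bitmask vs ||| 2 ^ u.index) ≠ 0 at h
    by_cases hvs : m &&& bitmask vs = 0
    · rw [Nat.and_or_distrib_left, hvs, Nat.zero_or, Nat.and_two_pow] at h
      exact ⟨u, by simp, by simpa using h⟩
    · obtain ⟨v, hv, hbit⟩ := ih hvs
      exact ⟨v, List.mem_cons_of_mem _ hv, hbit⟩

theorem Charts.congr (hc : Charts C x ps) (h : ∀ v ∈ ps.flatten, x v.index = x' v.index) :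
    Charts C x' ps where
  excess v hv := h v hv ▸ hc.excess v hv
  degree v hv := h v hv ▸ hc.degree v hv
  isPathSystem := by
    have hmap : ps.map (List.map fun v => x v.index) = ps.map (List.map fun v => x' v.index) :=
      List.map_congr_left fun p hp =>
        List.map_congr_left fun v hv => h v (List.mem_flatten_of_mem hp hv)
    exact hmap ▸ hc.isPathSystem

theorem Charts.w_eq (hc : Charts C x ps) (hv : v ∈ ps.flatten) : C.w (x v.index) = v.weight := by
  rw [C.w_eq_adjw_add_deg, hc.excess v hv, hc.degree v hv, Kind.weight, Nat.cast_add]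

/-- The state `st` describes the restriction of `φ` to the vertices `x 0, …, x (st.size - 1)`, and
the entries of the images of the other vertices lie in `{0, ±1}`. -/
structure Tracks (C : Config) (φ : C.V → Fin N → ℤ) (x : ℕ → C.V) (st : State) : Prop
    extends Charts C x st.paths where
  index_lt : ∀ v ∈ st.paths.flatten, v.index < st.size
  exists_index_eq : ∀ i < st.size, ∃ v ∈ st.paths.flatten, v.index = i
  fits : Fits (code (φ ∘ x) st.size) (mask (φ ∘ x) st.size) st.blocks univ
  abs_le_one : ∀ z, (∀ i < st.size, x i ≠ z) → ∀ e, |φ z e| ≤ 1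

theorem sum_code_mul_of_adj (hφ : C.IsEmbedding N φ) {n : ℕ} (hy : ∀ i < n, x i ≠ y)
    (hA : A.Nodup) (hmem : ∀ i, i ∈ A ↔ i < n ∧ C.graph.Adj y (x i)) :
    ((A.map fun i => 16 ^ (n - 1 - i)).sum : ℕ) + ∑ e, code (φ ∘ x) n e * φ y e = 0 := by
  have hdot : ∀ i ∈ range n, 16 ^ (n - 1 - i) * dot (φ (x i)) (φ y) =
      if i ∈ A then -16 ^ (n - 1 - i) else 0 := by
    intro i hi
    have hi := mem_range.1 hi
    have hadj : i ∈ A ↔ C.graph.Adj (x i) y := by rw [hmem, and_iff_right hi, C.graph.adj_comm]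
    rw [hφ, if_neg (hy i hi)]
    simp only [hadj]
    split_ifs <;> ring
  have hfilter : {i ∈ range n | i ∈ A} = A.toFinset := by
    ext i
    simp only [mem_filter, mem_range, List.mem_toFinset, and_iff_right_iff_imp]
    exact fun hi => ((hmem i).1 hi).1
  rw [sum_code_mul]
  simp only [Function.comp_apply]
  rw [sum_congr rfl hdot, ← sum_filter, hfilter, sum_neg_distrib, List.sum_toFinset _ hA]
  push_cast [List.map_map, Function.comp_def]
  ring

theorem Fits.meetsWell_eq_true {n : ℕ} {gs : List Block}
    (h : Fits (code (φ ∘ x) (n + 1)) (mask (φ ∘ x) (n + 1)) gs univ) (hv : v.index < n)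
    (hadj : v.index ∈ A ↔ C.graph.Adj (x v.index) (x n))
    (hmeets : C.MeetsProperly φ (x v.index) (x n)) : meetsWell gs n A v = true := by
  rw [meetsWell, h.share_eq (hv.trans n.lt_succ_self) n.lt_succ_self]
  by_cases hA : v.index ∈ A
  · rw [List.any_eq_true.2 ⟨_, hA, Nat.beq_refl _⟩]
    exact Nat.beq_eq ▸ hmeets.1 (hadj.1 hA)
  · rw [List.any_eq_false.2 fun i hi h => hA (by rwa [Nat.eq_of_beq_eq_true h]), cond_false,
      Bool.or_eq_true, Nat.beq_eq, Nat.beq_eq]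
    exact (hmeets.2 (mt hadj.2 hA)).imp id fun ⟨_, _, _, _, h2, _⟩ => h2

end Search

namespace Search

variable {C : Config} {N s : ℕ} {φ : C.V → Fin N → ℤ} {x : ℕ → C.V} {y : C.V} {st : State}
  {k : Kind} {ps : List (List Vertex)} {A : List ℕ} {v : Vertex}

theorem code_update : code (φ ∘ Function.update x st.size y) (st.size + 1) =
    appendCode (code (φ ∘ x) st.size) (φ y) := by
  rw [code, Function.comp_apply, Function.update_self]
  congr 1
  exact code_congr fun i hi => by simp [Function.update_of_ne hi.ne]

theorem mask_update : mask (φ ∘ Function.update x st.size y) (st.size + 1) =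
    appendMask (mask (φ ∘ x) st.size) st.size (φ y) := by
  rw [mask, Function.comp_apply, Function.update_self]
  congr 1
  exact mask_congr fun i hi => by simp [Function.update_of_ne hi.ne]

namespace Tracks

theorem update_apply_index (ht : Tracks C φ x st) (hv : v ∈ st.paths.flatten) :
    Function.update x st.size y v.index = x v.index :=
  Function.update_of_ne (ht.index_lt v hv).ne _ _

theorem extend (ht : Tracks C φ x st) (hc : Charts C (Function.update x st.size y) ps)
    (hperm : ps.flatten.Perm (⟨k, st.size⟩ :: st.paths.flatten)) {gs : List Block}
    (hgs : Fits (appendCode (code (φ ∘ x) st.size) (φ y))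
      (appendMask (mask (φ ∘ x) st.size) st.size (φ y)) gs univ) :
    Tracks C φ (Function.update x st.size y) ⟨st.size + 1, ps, gs⟩ where
  toCharts := hc
  index_lt v hv := by
    obtain rfl | hv := List.mem_cons.1 (hperm.mem_iff.1 hv)
    · exact st.size.lt_succ_self
    · exact (ht.index_lt v hv).trans st.size.lt_succ_self
  exists_index_eq i hi := by
    obtain hi | rfl := Nat.lt_succ_iff_lt_or_eq.1 hi
    · obtain ⟨v, hv, rfl⟩ := ht.exists_index_eq i hi
      exact ⟨v, hperm.mem_iff.2 (List.mem_cons_of_mem _ hv), rfl⟩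
    · exact ⟨⟨k, st.size⟩, hperm.mem_iff.2 (by simp), rfl⟩
  fits := by
    rwa [code_update, mask_update]
  abs_le_one z hz := ht.abs_le_one z fun i hi =>
    Function.update_of_ne hi.ne y x ▸ hz i (hi.trans st.size.lt_succ_self)

theorem eq_zero_of_and_bitmask_ne_zero (hlin : C.IsLinear) (ht : Tracks C φ x st)
    {known : List Vertex}
    (hknown : ∀ v ∈ known, v ∈ st.paths.flatten ∧ C.MeetsProperly φ (x v.index) y)
    (hadj : ∀ v ∈ known, v.index ∈ A ↔ C.graph.Adj (x v.index) y) (hy : C.adjw y = k.excess)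
    {e : Fin N} (he : mask (φ ∘ x) st.size e &&& bitmask (known.filter fun v =>
      !A.any v.index.beq && (v.excess.beq 0 || k.excess.beq 0)) ≠ 0) : φ y e = 0 := by
  obtain ⟨v, hv, hbit⟩ := exists_testBit_of_and_bitmask_ne_zero he
  obtain ⟨hv, hcond⟩ := List.mem_filter.1 hv
  obtain ⟨hflat, hmeet⟩ := hknown v hv
  simp only [Bool.and_eq_true, Bool.not_eq_true', List.any_eq_false, Nat.beq_eq,
    Bool.or_eq_true] at hcond
  refine inter_supp_eq_empty_iff.1 (hmeet.inter_supp_eq_empty hlin ?_ ?_) e (testBit_mask.1 hbit).2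
  · exact fun h => hcond.1 _ ((hadj v hv).2 h) rfl
  · rw [ht.excess v hflat, hy]
    exact_mod_cast hcond.2

theorem exists_of_addVertex (hlin : C.IsLinear) (hwc : C.WorkingConditions)
    (hφ : C.IsEmbedding N φ)
    (hmeets : ∀ u v, u ≠ v → C.w u + C.w v < s → C.MeetsProperly φ u v)
    (ht : Tracks C φ x st) (hy : ∀ i < st.size, x i ≠ y) (hA : A.Nodup)
    (hmem : ∀ i, i ∈ A ↔ i < st.size ∧ C.graph.Adj y (x i))
    (hc : Charts C (Function.update x st.size y) ps)
    (hperm : ps.flatten.Perm (⟨k, st.size⟩ :: st.paths.flatten)) {cont : State → Bool}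
    (h : addVertex s st k ps A cont = true) :
    ∃ gs, Tracks C φ (Function.update x st.size y) ⟨st.size + 1, ps, gs⟩ ∧
      cont ⟨st.size + 1, ps, gs⟩ = true := by
  have hk : (⟨k, st.size⟩ : Vertex) ∈ ps.flatten := hperm.mem_iff.2 (by simp)
  have hwy : C.w y = k.weight := by simpa using hc.w_eq hk
  have hey : C.adjw y = k.excess := by simpa using hc.excess _ hk
  rw [addVertex, hc.admissible_eq_true hlin hwc, Bool.not_true, Bool.false_or] at h
  set known := st.paths.flatten.filter fun v => (v.weight + k.weight).blt s
  have hknown : ∀ v ∈ known, v ∈ st.paths.flatten ∧ C.MeetsProperly φ (x v.index) y := by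
    intro v hv
    obtain ⟨hv, hw⟩ := List.mem_filter.1 hv
    refine ⟨hv, hmeets _ _ (hy _ (ht.index_lt v hv)) ?_⟩
    rw [ht.w_eq hv, hwy]
    exact_mod_cast Nat.blt_eq.mp hw
  have hadj : ∀ v ∈ known, v.index ∈ A ↔ C.graph.Adj (x v.index) y := fun v hv => by
    rw [hmem, and_iff_right (ht.index_lt v (hknown v hv).1), C.graph.adj_comm]
  have hcard : #{e ∈ univ | φ y e ≠ 0} = k.weight := by
    have := card_supp_eq_dot (ht.abs_le_one y hy)
    rw [hφ, if_pos rfl, hwy] at this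
    exact_mod_cast this
  obtain ⟨gs, hgs, hcont⟩ := exists_fits_of_allSplits (ht.abs_le_one y hy) h ht.fits
    (fun _ _ => ht.eq_zero_of_and_bitmask_ne_zero hlin hknown hadj hey) hcard
    (sum_code_mul_of_adj hφ hy hA hmem)
  have ht' := ht.extend hc hperm hgs
  refine ⟨gs, ht', ?_⟩
  rw [Bool.or_eq_true, Bool.not_eq_true', ← Bool.not_eq_true, List.all_eq_true] at hcont
  refine hcont.resolve_left (not_not.2 fun v hv => ?_)
  have hv' := (hknown v hv).1
  refine ht'.fits.meetsWell_eq_true (ht.index_lt v hv') ?_ ?_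
  · rw [ht.update_apply_index hv', Function.update_self, hadj v hv]
  · rw [ht.update_apply_index hv', Function.update_self]
    exact (hknown v hv).2

end Tracks

end Search

/-! ### Prolonging and joining paths -/

namespace Search

variable {C : Config} {x : ℕ → C.V} {y : C.V} {ps qs : List (List Vertex)} {p q : List Vertex}
  {v : Vertex} {e : OpenEnd}

section OpenEnds

variable {α : Type} {a : α} {l l' : List α}

theorem perm_of_mem_picks (h : (a, l') ∈ picks l) : l.Perm (a :: l') := by
  induction l generalizing l' with
  | nil => simp [picks] at h
  | cons b l ih =>
    simp only [picks, List.mem_cons, Prod.mk.injEq, List.mem_map, Prod.exists] at h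
    obtain ⟨rfl, rfl⟩ | ⟨c, m, hmem, rfl, rfl⟩ := h
    · exact .refl _
    · exact ((ih hmem).cons b).trans (.swap _ _ _)

theorem exists_mem_picks (h : a ∈ l) : ∃ l', (a, l') ∈ picks l := by
  induction l with
  | nil => simp at h
  | cons b l ih =>
    obtain rfl | h := List.mem_cons.1 h
    · exact ⟨l, by simp [picks]⟩
    · obtain ⟨l', hl'⟩ := ih h
      exact ⟨b :: l', List.mem_cons_of_mem _ (List.mem_map.2 ⟨_, hl', rfl⟩)⟩

theorem mem_orientations : q ∈ orientations p ↔ q = p ∨ q = p.reverse := by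
  unfold orientations
  split <;> simp

theorem openHead_eq_some {rest : List (List Vertex)} : openHead rest p = some e ↔
    p = e.head :: e.tail ∧ rest = e.rest ∧ min 1 e.tail.length < e.head.degree := by
  obtain ⟨head, tail, rest'⟩ := e
  obtain _ | ⟨v, _ | ⟨u, p⟩⟩ := p
  all_goals
    simp only [openHead, cond_eq_ite, Nat.blt_eq, Option.ite_none_right_eq_some,
      Option.some.injEq, OpenEnd.mk.injEq]
  · simp
  · grind
  · grind

theorem mem_openEnds : e ∈ openEnds ps ↔ ∃ p, (p, e.rest) ∈ picks ps ∧
    (e.head :: e.tail = p ∨ e.head :: e.tail = p.reverse) ∧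
      min 1 e.tail.length < e.head.degree := by
  simp only [openEnds, List.mem_flatMap, List.mem_filterMap, openHead_eq_some, mem_orientations,
    Prod.exists]
  constructor
  · rintro ⟨p, rest, hp, q, hq, rfl, rfl, hdeg⟩
    exact ⟨p, hp, hq, hdeg⟩
  · rintro ⟨p, hp, hq, hdeg⟩
    exact ⟨p, e.rest, hp, e.head :: e.tail, hq, rfl, rfl, hdeg⟩

theorem flatten_perm_of_mem_openEnds (he : e ∈ openEnds ps) :
    ps.flatten.Perm ((e.head :: e.tail) :: e.rest).flatten := by
  obtain ⟨p, hp, hor, -⟩ := mem_openEnds.1 he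
  refine (perm_of_mem_picks hp).flatten.trans ?_
  rw [List.flatten_cons, List.flatten_cons]
  refine .append_right _ ?_
  obtain h | h := hor <;> rw [h]
  exact (List.reverse_perm p).symm

end OpenEnds

namespace Charts

theorem perm (hc : Charts C x ps) (h : ps.Perm qs) : Charts C x qs where
  excess v hv := hc.excess v (h.flatten.mem_iff.2 hv)
  degree v hv := hc.degree v (h.flatten.mem_iff.2 hv)
  isPathSystem := hc.isPathSystem.perm (h.map _)

theorem reverse (hc : Charts C x (p :: ps)) : Charts C x (p.reverse :: ps) where
  excess v hv := hc.excess v (by simpa using hv)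
  degree v hv := hc.degree v (by simpa using hv)
  isPathSystem := by simpa using hc.isPathSystem.reverse

theorem of_cons (hc : Charts C x (p :: ps)) : Charts C x ps where
  excess v hv := hc.excess v (List.mem_append_right p hv)
  degree v hv := hc.degree v (List.mem_append_right p hv)
  isPathSystem := hc.isPathSystem.of_cons

theorem append_of_mem_picks {rest : List (List Vertex)} (hc : Charts C x (qs ++ ps))
    (hp : (p, rest) ∈ picks ps) (hq : q = p ∨ q = p.reverse) : Charts C x (qs ++ q :: rest) := by
  have hc := hc.perm (((perm_of_mem_picks hp).append_left qs).trans List.perm_middle)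
  obtain rfl | rfl := hq
  · exact hc.perm List.perm_middle.symm
  · exact hc.reverse.perm List.perm_middle.symm

theorem append_of_mem_openEnds (hc : Charts C x (qs ++ ps)) (he : e ∈ openEnds ps) :
    Charts C x (qs ++ (e.head :: e.tail) :: e.rest) := by
  obtain ⟨p, hp, hq, -⟩ := mem_openEnds.1 he
  exact hc.append_of_mem_picks hp hq

theorem exists_new_adj_of_mem_openEnds (hlin : C.IsLinear) (hc : Charts C x ps)
    (he : e ∈ openEnds ps) :
    ∃ y, C.graph.Adj (x e.head.index) y ∧ ∀ v ∈ ps.flatten, x v.index ≠ y := by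
  have hc' : Charts C x ((e.head :: e.tail) :: e.rest) :=
    hc.append_of_mem_openEnds (qs := []) he
  obtain ⟨-, -, -, hdeg⟩ := mem_openEnds.1 he
  have hdeg' := hc'.degree e.head (by simp)
  have hperm := flatten_perm_of_mem_openEnds he
  suffices ∃ y, C.graph.Adj (x e.head.index) y ∧ (e.tail.map fun v => x v.index).head? ≠ some y by
    obtain ⟨y, hadj, hne⟩ := this
    refine ⟨y, hadj, fun v hv hvy => hne ?_⟩
    refine hc'.isPathSystem.head?_eq_of_adj hlin.2 ?_ hadj
    have hmem := List.mem_map_of_mem (f := fun v => x v.index) (hperm.mem_iff.1 hv)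
    rwa [List.map_flatten, hvy] at hmem
  rcases htail : e.tail with _ | ⟨u, t⟩
  · obtain ⟨y, hy⟩ := C.exists_adj_of_deg_pos (hdeg'.symm ▸ (Nat.zero_le _).trans_lt hdeg)
    exact ⟨y, hy, by simp⟩
  · rw [htail, List.length_cons, min_eq_left (by lia), ← hdeg'] at hdeg
    obtain ⟨y, hne, hy⟩ := C.exists_adj_ne_of_two_le_deg hdeg (x u.index)
    exact ⟨y, hy, by simpa [htail] using hne.symm⟩

theorem exists_mem_openEnds (hlin : C.IsLinear) (hc : Charts C x ps) (hv : v ∈ ps.flatten)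
    (hadj : C.graph.Adj (x v.index) y) (hy : ∀ u ∈ ps.flatten, x u.index ≠ y) :
    ∃ e ∈ openEnds ps, e.head = v := by
  obtain ⟨p, hp, hvp⟩ := List.mem_flatten.1 hv
  obtain ⟨rest, hrest⟩ := exists_mem_picks hp
  have hend : ∀ t, (v :: t = p ∨ v :: t = p.reverse) → ∃ e ∈ openEnds ps, e.head = v := by
    intro t ht
    refine ⟨⟨v, t, rest⟩, mem_openEnds.2 ⟨p, hrest, ht, ?_⟩, rfl⟩
    rw [← hc.degree v hv]
    obtain _ | ⟨b, t⟩ := t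
    · exact C.deg_pos hadj
    · have hc' : Charts C x ((v :: b :: t) :: rest) := hc.append_of_mem_picks (qs := []) hrest ht
      have hb : b ∈ p :=
        ht.elim (fun h => h ▸ by simp) fun h => List.mem_reverse.1 (h ▸ by simp)
      have hvb := (List.isChain_cons_cons.1 (hc'.isChain (List.mem_cons_self ..))).1
      rw [List.length_cons, min_eq_left (by lia)]
      exact C.two_le_deg (hy b (List.mem_flatten_of_mem hp hb)) hvb hadj
  obtain ⟨l, t, rfl⟩ := List.append_of_mem hvp
  obtain rfl | ⟨l, a, rfl⟩ := List.eq_nil_or_concat' l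
  · exact hend t (.inl rfl)
  obtain _ | ⟨b, t⟩ := t
  · exact hend (l ++ [a]).reverse (.inr (by simp))
  · have hinfix : [a, v, b] <:+: (l ++ [a]) ++ v :: b :: t := ⟨l, t, by simp⟩
    have hchain := (hc.isChain hp).infix (hinfix.map _)
    have hnodup := (hc.nodup hp).sublist (hinfix.map _).sublist
    have hab : x a.index ≠ x b.index := fun h => by simp [h] at hnodup
    simp only [List.map_cons, List.map_nil, List.isChain_cons_cons] at hchain
    have hflat : ∀ u ∈ [a, v, b], x u.index ≠ y := fun u hu =>
      hy u (List.mem_flatten_of_mem hp (hinfix.subset hu))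
    obtain h | h := hlin.eq_or_eq_of_adj hab hchain.1.symm hchain.2.1 hadj
    · exact absurd h.symm (hflat a (by simp))
    · exact absurd h.symm (hflat b (by simp))

end Charts

end Search

namespace Search

variable {C : Config} {x : ℕ → C.V} {y : C.V} {ps qs : List (List Vertex)} {t t' : List Vertex}
  {u v z : Vertex}

theorem exists_mem_allKinds (hlin : C.IsLinear) (hwc : C.WorkingConditions) (y : C.V) :
    ∃ k ∈ allKinds, C.adjw y = k.excess ∧ C.deg y = k.degree := by
  have hdeg := hlin.1 y
  have hw := hwc.1 y
  have hle := hwc.2.1 y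
  rw [C.w_eq_adjw_add_deg] at hw
  have hnonneg : 0 ≤ C.adjw y := by lia
  lift C.adjw y to ℕ using hnonneg with n
  refine ⟨⟨n, C.deg y⟩, ?_, rfl, rfl⟩
  generalize C.deg y = d at hdeg hw
  norm_cast at hw hle
  simp only [allKinds, lightKinds, heavyKinds, List.cons_append, List.nil_append, List.mem_cons,
    Kind.mk.injEq, List.not_mem_nil, or_false]
  lia

theorem Charts.exists_mem_newKinds (hlin : C.IsLinear) (hwc : C.WorkingConditions)
    (hc : Charts C x ps) (hy : ∀ v ∈ ps.flatten, x v.index ≠ y) (hdeg : 0 < C.deg y) :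
    ∃ k ∈ newKinds ps, C.adjw y = k.excess ∧ C.deg y = k.degree := by
  obtain ⟨k, hk, hek, hdk⟩ := exists_mem_allKinds hlin hwc y
  have hk : k ∈ lightKinds ++ heavyKinds := by
    simp only [allKinds, List.mem_cons] at hk
    obtain rfl | rfl | hk := hk
    · exact absurd hdk hdeg.ne'
    · exact absurd hdk hdeg.ne'
    · exact hk
  refine ⟨k, ?_, hek, hdk⟩
  rw [newKinds]
  by_cases hheavy : ps.flatten.any (Nat.blt 1 ·.excess) = true
  · obtain ⟨v, hv, hv1⟩ := List.any_eq_true.1 hheavy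
    rw [Nat.blt_eq] at hv1
    rw [hheavy, cond_true]
    refine (List.mem_append.1 hk).resolve_right fun hk => hy v hv ?_
    refine hwc.2.2.1 _ _ (by rw [hc.excess v hv]; exact_mod_cast hv1) ?_
    rw [hek]
    simp only [heavyKinds, List.mem_cons, List.not_mem_nil, or_false] at hk
    obtain rfl | rfl | rfl | rfl := hk <;> norm_num
  · rwa [Bool.eq_false_iff.2 hheavy, cond_false]

theorem forall_mem_flatten_map {P : C.V → Prop} (h : ∀ v ∈ ps.flatten, P (x v.index)) :
    ∀ b ∈ (ps.map (List.map fun v => x v.index)).flatten, P b := by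
  rw [← List.map_flatten]
  exact List.forall_mem_map.2 h

theorem flatten_join_perm :
    (((u :: t).reverse ++ z :: v :: t') :: ps).flatten.Perm
      (z :: ((u :: t) :: (v :: t') :: ps).flatten) := by
  simp only [List.flatten_cons, List.append_assoc, List.cons_append]
  exact List.perm_middle.trans (((List.reverse_perm (u :: t)).append_right _).cons z)

namespace Charts

theorem insert (hc : Charts C x qs) (hez : C.adjw (x z.index) = z.excess)
    (hdz : C.deg (x z.index) = z.degree) (hperm : ps.flatten.Perm (z :: qs.flatten))
    (hsys : IsPathSystem C.graph (ps.map (List.map fun v => x v.index))) : Charts C x ps where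
  excess v hv := by
    obtain rfl | hv := List.mem_cons.1 (hperm.mem_iff.1 hv)
    exacts [hez, hc.excess v hv]
  degree v hv := by
    obtain rfl | hv := List.mem_cons.1 (hperm.mem_iff.1 hv)
    exacts [hdz, hc.degree v hv]
  isPathSystem := hsys

theorem eq_of_adj_of_adj (hlin : C.IsLinear) (hc : Charts C x ((u :: t) :: ps))
    (hy : ∀ v ∈ ((u :: t) :: ps).flatten, x v.index ≠ y) (hyu : C.graph.Adj y (x u.index))
    (hv : v ∈ u :: t) (hyv : C.graph.Adj y (x v.index)) : v = u := by
  have hchain := hc.isChain (List.mem_cons_self ..)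
  have hnodup := hc.nodup (List.mem_cons_self ..)
  have hy' : y ∉ (u :: t).map fun v => x v.index := fun hmem => by
    obtain ⟨v, hv, h⟩ := List.mem_map.1 hmem
    exact hy v (List.mem_append_left _ hv) h
  have h := head?_eq_of_isAcyclic_of_isChain hlin.2 (hchain.cons_cons hyu)
    (List.nodup_cons.2 ⟨hy', hnodup⟩) hyv (List.mem_map_of_mem (f := fun v => x v.index) hv)
  exact (hc.eq_of_apply_index_eq (by simp) (List.mem_append_left _ hv) (Option.some.inj h)).symm

theorem cons_head (hc : Charts C x ((u :: t) :: ps)) (hez : C.adjw (x z.index) = z.excess)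
    (hdz : C.deg (x z.index) = z.degree)
    (hz : ∀ v ∈ ((u :: t) :: ps).flatten, x v.index ≠ x z.index)
    (hzu : C.graph.Adj (x z.index) (x u.index))
    (hps : ∀ v ∈ ps.flatten, ¬ C.graph.Adj (x z.index) (x v.index)) :
    Charts C x ((z :: u :: t) :: ps) := by
  have hz' := forall_mem_flatten_map (P := (· ≠ x z.index)) hz
  have hps' := forall_mem_flatten_map (P := fun b => ¬ C.graph.Adj (x z.index) b) hps
  exact hc.insert hez hdz (.refl _) (hc.isPathSystem.cons_head (fun h => hz' _ h rfl) hzu hps')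

theorem join (hc : Charts C x ((u :: t) :: (v :: t') :: ps))
    (hez : C.adjw (x z.index) = z.excess) (hdz : C.deg (x z.index) = z.degree)
    (hz : ∀ w ∈ ((u :: t) :: (v :: t') :: ps).flatten, x w.index ≠ x z.index)
    (hzu : C.graph.Adj (x z.index) (x u.index)) (hzv : C.graph.Adj (x z.index) (x v.index))
    (hps : ∀ w ∈ ps.flatten, ¬ C.graph.Adj (x z.index) (x w.index)) :
    Charts C x (((u :: t).reverse ++ z :: v :: t') :: ps) := by
  have hz' := forall_mem_flatten_map (P := (· ≠ x z.index)) hz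
  have hps' := forall_mem_flatten_map (P := fun b => ¬ C.graph.Adj (x z.index) b) hps
  refine hc.insert hez hdz flatten_join_perm ?_
  simpa using hc.isPathSystem.join (fun h => hz' _ h rfl) hzu hzv hps'

end Charts

end Search

/-! ### Soundness of the search -/

namespace Search

variable {C : Config} {N s : ℕ} {φ : C.V → Fin N → ℤ} {x : ℕ → C.V} {y : C.V} {st : State}
  {k : Kind} {qs : List (List Vertex)} {u v : Vertex} {e : OpenEnd} {cont : State → Bool}

namespace Tracks

theorem forall_ne (ht : Tracks C φ x st) (hy : ∀ v ∈ st.paths.flatten, x v.index ≠ y) :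
    ∀ i < st.size, x i ≠ y := fun i hi => by
  obtain ⟨v, hv, rfl⟩ := ht.exists_index_eq i hi
  exact hy v hv

theorem charts_update (ht : Tracks C φ x st) : Charts C (Function.update x st.size y) st.paths :=
  ht.toCharts.congr fun _ hv => (ht.update_apply_index hv).symm

theorem mem_map_index_iff (ht : Tracks C φ x st) {vs : List Vertex}
    (hsub : vs ⊆ st.paths.flatten)
    (hvs : ∀ v ∈ st.paths.flatten, C.graph.Adj y (x v.index) ↔ v ∈ vs) (i : ℕ) :
    i ∈ vs.map (·.index) ↔ i < st.size ∧ C.graph.Adj y (x i) := by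
  rw [List.mem_map]
  constructor
  · rintro ⟨v, hv, rfl⟩
    exact ⟨ht.index_lt v (hsub hv), (hvs v (hsub hv)).2 hv⟩
  · rintro ⟨hi, hadj⟩
    obtain ⟨v, hv, rfl⟩ := ht.exists_index_eq i hi
    exact ⟨v, (hvs v hv).1 hadj, rfl⟩

theorem exists_of_prolong (hlin : C.IsLinear) (hwc : C.WorkingConditions)
    (hφ : C.IsEmbedding N φ)
    (hmeets : ∀ u v, u ≠ v → C.w u + C.w v < s → C.MeetsProperly φ u v)
    (ht : Tracks C φ x st) (he : e ∈ openEnds st.paths) (hek : C.adjw y = k.excess)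
    (hdk : C.deg y = k.degree) (hy : ∀ v ∈ st.paths.flatten, x v.index ≠ y)
    (hadj : C.graph.Adj y (x e.head.index))
    (hrest : ∀ v ∈ e.rest.flatten, ¬ C.graph.Adj y (x v.index))
    (h : addVertex s st k ((⟨k, st.size⟩ :: e.head :: e.tail) :: e.rest) [e.head.index] cont
      = true) :
    ∃ st', Tracks C φ (Function.update x st.size y) st' ∧ st'.size = st.size + 1 ∧
      cont st' = true := by
  have hperm := flatten_perm_of_mem_openEnds he
  have hc : Charts C x ((e.head :: e.tail) :: e.rest) := ht.append_of_mem_openEnds (qs := []) he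
  have hvs : ∀ v ∈ st.paths.flatten, C.graph.Adj y (x v.index) ↔ v ∈ [e.head] := by
    intro v hv
    rw [List.mem_singleton]
    refine ⟨fun hyv => ?_, fun h => h ▸ hadj⟩
    obtain hv | hv := List.mem_append.1 (hperm.mem_iff.1 hv)
    · exact hc.eq_of_adj_of_adj hlin (fun v hv => hy v (hperm.mem_iff.2 hv)) hadj hv hyv
    · exact absurd hyv (hrest v hv)
  have hindex : ∀ v ∈ ((e.head :: e.tail) :: e.rest).flatten,
      Function.update x st.size y v.index = x v.index := fun v hv =>
    ht.update_apply_index (hperm.mem_iff.2 hv)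
  have hc' : Charts C (Function.update x st.size y)
      ((⟨k, st.size⟩ :: e.head :: e.tail) :: e.rest) := by
    refine (ht.charts_update.append_of_mem_openEnds (qs := []) he).cons_head ?_ ?_ ?_ ?_ ?_ <;>
      simp only [Function.update_self]
    · exact hek
    · exact hdk
    · exact fun v hv => hindex v hv ▸ hy v (hperm.mem_iff.2 hv)
    · rwa [hindex _ (by simp)]
    · exact fun v hv => hindex v (List.mem_append_right _ hv) ▸ hrest v hv
  obtain ⟨gs, ht', hcont⟩ := ht.exists_of_addVertex hlin hwc hφ hmeets (ht.forall_ne hy)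
    (List.nodup_singleton _)
    (ht.mem_map_index_iff (fun v hv => hperm.mem_iff.2 (by simp_all)) hvs) hc'
    (hperm.symm.cons _) h
  exact ⟨_, ht', rfl, hcont⟩

end Tracks

end Search

namespace Search

variable {C : Config} {N s fuel : ℕ} {φ : C.V → Fin N → ℤ} {x : ℕ → C.V} {y : C.V} {st : State}
  {k : Kind} {u v : Vertex} {e e' : OpenEnd} {ps : List (List Vertex)} {cont accept : State → Bool}

theorem Charts.adj_iff_mem_pair (hlin : C.IsLinear) (hc : Charts C x ps)
    (hu : u ∈ ps.flatten) (hv : v ∈ ps.flatten) (huv : u ≠ v) (hyu : C.graph.Adj y (x u.index))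
    (hyv : C.graph.Adj y (x v.index)) :
    ∀ z ∈ ps.flatten, C.graph.Adj y (x z.index) ↔ z ∈ [u, v] := by
  intro z hz
  rw [List.mem_pair]
  refine ⟨fun hyz => ?_, by rintro (rfl | rfl) <;> assumption⟩
  exact (hlin.eq_or_eq_of_adj (huv ∘ hc.eq_of_apply_index_eq hu hv) hyu hyv hyz).imp
    (hc.eq_of_apply_index_eq hz hu) (hc.eq_of_apply_index_eq hz hv)

theorem flatten_perm_of_mem_openEnds_rest (he : e ∈ openEnds ps) (he' : e' ∈ openEnds e.rest) :
    ps.flatten.Perm ((e.head :: e.tail) :: (e'.head :: e'.tail) :: e'.rest).flatten :=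
  (flatten_perm_of_mem_openEnds he).trans ((flatten_perm_of_mem_openEnds he').append_left _)

theorem Charts.append_of_mem_openEnds_rest (hc : Charts C x ps) (he : e ∈ openEnds ps)
    (he' : e' ∈ openEnds e.rest) :
    Charts C x ((e.head :: e.tail) :: (e'.head :: e'.tail) :: e'.rest) :=
  (hc.append_of_mem_openEnds (qs := []) he).append_of_mem_openEnds (qs := [e.head :: e.tail]) he'

namespace Tracks

theorem charts_join (ht : Tracks C φ x st) (he : e ∈ openEnds st.paths)
    (he' : e' ∈ openEnds e.rest) (hek : C.adjw y = k.excess) (hdk : C.deg y = k.degree)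
    (hy : ∀ v ∈ st.paths.flatten, x v.index ≠ y) (hadj : C.graph.Adj y (x e.head.index))
    (hadj' : C.graph.Adj y (x e'.head.index))
    (hrest : ∀ v ∈ e'.rest.flatten, ¬ C.graph.Adj y (x v.index)) :
    Charts C (Function.update x st.size y)
      (((e.head :: e.tail).reverse ++ ⟨k, st.size⟩ :: e'.head :: e'.tail) :: e'.rest) := by
  have hperm := flatten_perm_of_mem_openEnds_rest he he'
  have hindex : ∀ v ∈ ((e.head :: e.tail) :: (e'.head :: e'.tail) :: e'.rest).flatten,
      Function.update x st.size y v.index = x v.index := fun v hv =>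
    ht.update_apply_index (hperm.mem_iff.2 hv)
  refine (ht.charts_update.append_of_mem_openEnds_rest he he').join ?_ ?_ ?_ ?_ ?_ ?_ <;>
    simp only [Function.update_self]
  · exact hek
  · exact hdk
  · exact fun v hv => hindex v hv ▸ hy v (hperm.mem_iff.2 hv)
  · rwa [hindex _ (by simp)]
  · rwa [hindex _ (by simp)]
  · exact fun v hv => hindex v (List.mem_append_right _ (List.mem_append_right _ hv)) ▸ hrest v hv

theorem exists_of_join (hlin : C.IsLinear) (hwc : C.WorkingConditions)
    (hφ : C.IsEmbedding N φ)
    (hmeets : ∀ u v, u ≠ v → C.w u + C.w v < s → C.MeetsProperly φ u v)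
    (ht : Tracks C φ x st) (he : e ∈ openEnds st.paths) (he' : e' ∈ openEnds e.rest)
    (hek : C.adjw y = k.excess) (hdk : C.deg y = k.degree)
    (hy : ∀ v ∈ st.paths.flatten, x v.index ≠ y)
    (hadj : C.graph.Adj y (x e.head.index)) (hadj' : C.graph.Adj y (x e'.head.index))
    (h : addVertex s st k
      (((e.head :: e.tail).reverse ++ ⟨k, st.size⟩ :: e'.head :: e'.tail) :: e'.rest)
      [e.head.index, e'.head.index] cont = true) :
    ∃ st', Tracks C φ (Function.update x st.size y) st' ∧ st'.size = st.size + 1 ∧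
      cont st' = true := by
  have hperm := flatten_perm_of_mem_openEnds_rest he he'
  have hnodup : (e.head :: e.tail ++ e'.head :: (e'.tail ++ e'.rest.flatten)).Nodup :=
    (ht.append_of_mem_openEnds_rest he he').nodup_flatten.of_map
  have hne : e.head ≠ e'.head := fun h => by simp [h] at hnodup
  have hsub : [e.head, e'.head] ⊆ st.paths.flatten := fun v hv =>
    hperm.mem_iff.2 (by rcases List.mem_pair.1 hv with rfl | rfl <;> simp)
  have hvs := ht.adj_iff_mem_pair hlin (hsub (by simp)) (hsub (by simp)) hne hadj hadj'
  have hrest : ∀ v ∈ e'.rest.flatten, ¬ C.graph.Adj y (x v.index) := fun v hv => by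
    rw [hvs v (hperm.mem_iff.2 (by simp_all)), List.mem_pair]
    grind
  have hindices : [e.head.index, e'.head.index].Nodup := by
    refine List.nodup_cons.2 ⟨fun h => hne ?_, List.nodup_singleton _⟩
    have h := List.mem_singleton.1 h
    exact ht.eq_of_apply_index_eq (hsub (by simp)) (hsub (by simp)) (congrArg x h)
  obtain ⟨gs, ht', hcont⟩ := ht.exists_of_addVertex hlin hwc hφ hmeets (ht.forall_ne hy)
    hindices (ht.mem_map_index_iff hsub hvs)
    (ht.charts_join he he' hek hdk hy hadj hadj' hrest)
    (flatten_join_perm.trans (hperm.symm.cons _)) h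
  exact ⟨_, ht', rfl, hcont⟩

theorem exists_of_allExtensions (hlin : C.IsLinear) (hwc : C.WorkingConditions)
    (hφ : C.IsEmbedding N φ)
    (hmeets : ∀ u v, u ≠ v → C.w u + C.w v < s → C.MeetsProperly φ u v)
    (ht : Tracks C φ x st) (he : e ∈ openEnds st.paths)
    (h : allExtensions s st e cont = true) :
    ∃ y st', Tracks C φ (Function.update x st.size y) st' ∧ st'.size = st.size + 1 ∧
      cont st' = true := by
  obtain ⟨y, hadj, hy⟩ := ht.exists_new_adj_of_mem_openEnds hlin he
  obtain ⟨k, hk, hek, hdk⟩ := ht.exists_mem_newKinds hlin hwc hy (C.deg_pos hadj.symm)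
  have h := List.all_eq_true.1 h k hk
  simp only [Bool.and_eq_true, Bool.or_eq_true, Nat.beq_eq, List.all_eq_true] at h
  refine ⟨y, ?_⟩
  by_cases hrest : ∀ v ∈ e.rest.flatten, ¬ C.graph.Adj y (x v.index)
  · exact ht.exists_of_prolong hlin hwc hφ hmeets he hek hdk hy hadj.symm hrest h.1
  push Not at hrest
  obtain ⟨v, hv, hyv⟩ := hrest
  have hc : Charts C x ((e.head :: e.tail) :: e.rest) := ht.append_of_mem_openEnds (qs := []) he
  have hperm := flatten_perm_of_mem_openEnds he
  obtain ⟨e', he', rfl⟩ := hc.of_cons.exists_mem_openEnds hlin hv hyv.symm fun u hu =>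
    hy u (hperm.mem_iff.2 (List.mem_append_right _ hu))
  have hne : x e.head.index ≠ x e'.head.index := fun heq => by
    have := hc.eq_of_apply_index_eq (by simp) (List.mem_append_right _ hv) heq
    have hnodup := hc.nodup_flatten.of_map
    grind
  have hdeg := C.two_le_deg hne hadj.symm hyv
  exact ht.exists_of_join hlin hwc hφ hmeets he he' hek hdk hy hadj.symm hyv
    (h.2.resolve_left (by lia) e' he')

theorem exists_of_refutes (hlin : C.IsLinear) (hwc : C.WorkingConditions)
    (hφ : C.IsEmbedding N φ)
    (hmeets : ∀ u v, u ≠ v → C.w u + C.w v < s → C.MeetsProperly φ u v)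
    (ht : Tracks C φ x st) (h : refutes s accept fuel st = true) :
    ∃ x' st', Tracks C φ x' st' ∧ accept st' = true ∧ st.size ≤ st'.size ∧
      ∀ i < st.size, x' i = x i := by
  induction fuel generalizing x st with
  | zero => exact ⟨x, st, ht, h, le_rfl, fun _ _ => rfl⟩
  | succ fuel ih =>
    rw [refutes, Bool.or_eq_true] at h
    obtain h | h := h
    · exact ⟨x, st, ht, h, le_rfl, fun _ _ => rfl⟩
    split at h
    · exact absurd h (by simp)
    · rename_i e he
      obtain ⟨y, st', ht', hsize, hcont⟩ :=
        ht.exists_of_allExtensions hlin hwc hφ hmeets (List.argmin_mem he) h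
      obtain ⟨x', st'', ht'', haccept, hle, hx'⟩ := ih ht' hcont
      refine ⟨x', st'', ht'', haccept, by lia, fun i hi => ?_⟩
      rw [hx' i (by lia), Function.update_of_ne hi.ne]

end Tracks

end Search

/-! ### Bounds on the entries -/

section DotSelf

variable {N : ℕ} {a : Fin N → ℤ} {e : Fin N}

theorem eq_zero_of_dot_self_nonpos (h : dot a a ≤ 0) : a = 0 := by
  have hnonneg : 0 ≤ dot a a := sum_nonneg fun i _ => mul_self_nonneg (a i)
  exact dotProduct_self_eq_zero.1 (h.antisymm hnonneg)

theorem dot_self_eq_sq_add (a : Fin N → ℤ) (e : Fin N) :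
    dot a a = a e ^ 2 + dot (Function.update a e 0) (Function.update a e 0) := by
  simp only [dot, ← add_sum_erase univ _ (mem_univ e), Function.update_self, mul_zero, zero_add,
    sq, add_right_inj]
  refine sum_congr rfl fun i hi => ?_
  rw [Function.update_of_ne (ne_of_mem_erase hi)]

theorem sq_le_dot_self (a : Fin N → ℤ) (e : Fin N) : a e ^ 2 ≤ dot a a :=
  sq (a e) ▸ single_le_sum (f := fun i => a i * a i) (fun i _ => mul_self_nonneg (a i))
    (mem_univ e)

theorem abs_le_one_of_dot_self_le_three (h : dot a a ≤ 3) (e : Fin N) : |a e| ≤ 1 := by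
  have := (sq_le_dot_self a e).trans h
  rw [abs_le]
  constructor <;> nlinarith

theorem eq_zero_of_dot_self_le_sq (h : dot a a ≤ a e ^ 2) {i : Fin N} (hi : i ≠ e) : a i = 0 := by
  have := dot_self_eq_sq_add a e
  simpa [Function.update_of_ne hi] using
    congrFun (eq_zero_of_dot_self_nonpos (a := Function.update a e 0) (by lia)) i

theorem exists_abs_eq_one_of_dot_self_eq (h : dot a a = a e ^ 2 + 1) :
    ∃ f ≠ e, |a f| = 1 ∧ ∀ i, i ≠ e → i ≠ f → a i = 0 := by
  have hsplit := dot_self_eq_sq_add a e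
  set a' := Function.update a e 0 with ha'
  have hone : dot a' a' = 1 := by lia
  obtain ⟨f, hf⟩ : ∃ f, a' f ≠ 0 := by
    by_contra! hzero
    simp [dot, hzero] at hone
  have hfe : f ≠ e := by
    rintro rfl
    simp [ha'] at hf
  have hsq : a' f ^ 2 = 1 := by
    have := sq_le_dot_self a' f
    have := sq_pos_of_ne_zero hf
    lia
  refine ⟨f, hfe, ?_, fun i hie hif => ?_⟩
  · rw [← Function.update_of_ne hfe 0 a, ← abs_one, ← sq_eq_sq_iff_abs_eq_abs, one_pow]
    exact hsq
  · rw [← Function.update_of_ne hie 0 a]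
    exact eq_zero_of_dot_self_le_sq (hone.trans hsq.symm).le hif

end DotSelf

namespace Config

variable {C : Config} {N : ℕ} {φ : C.V → Fin N → ℤ} {v : C.V} {e : Fin N}

theorem IsEmbedding.dot_self (hφ : C.IsEmbedding N φ) (v : C.V) : dot (φ v) (φ v) = C.w v := by
  rw [hφ, if_pos rfl]

theorem IsEmbedding.dot_of_adj (hφ : C.IsEmbedding N φ) {u : C.V} (h : C.graph.Adj u v) :
    dot (φ u) (φ v) = -1 := by
  rw [hφ, if_neg h.ne, if_pos h]

theorem IsEmbedding.abs_le_one_of_adjw_le_one (hφ : C.IsEmbedding N φ) (hlin : C.IsLinear)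
    (hv : C.adjw v ≤ 1) (e : Fin N) : |φ v e| ≤ 1 := by
  have hdeg := hlin.1 v
  refine abs_le_one_of_dot_self_le_three ?_ e
  rw [hφ.dot_self, C.w_eq_adjw_add_deg]
  lia

theorem IsEmbedding.not_even_of_adj (hφ : C.IsEmbedding N φ) {u : C.V}
    (hw : C.w v ≤ φ v e ^ 2) (h : C.graph.Adj v u) : ¬ Even (φ v e) := by
  intro heven
  have hdot := hφ.dot_of_adj h
  rw [dot, sum_eq_single e (fun i _ hi => by
    rw [eq_zero_of_dot_self_le_sq ((hφ.dot_self v).trans_le hw) hi, zero_mul]) (by simp)] at hdot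
  have := heven.mul_right (φ u e)
  rw [hdot] at this
  exact absurd this (by decide)

end Config

namespace Search

variable {C : Config} {N : ℕ} {φ : C.V → Fin N → ℤ} {u : C.V} {e : Fin N} {k : Kind}

theorem tracks_one (hek : C.adjw u = k.excess) (hdk : C.deg u = k.degree)
    (hone : ∀ v, v ≠ u → ∀ e, |φ v e| ≤ 1) {gs : List Block}
    (hgs : Fits (φ u) (fun e => if φ u e = 0 then 0 else 1) gs univ) :
    Tracks C φ (fun _ => u) ⟨1, [[⟨k, 0⟩]], gs⟩ where
  excess v hv := by simp_all
  degree v hv := by simp_all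
  isPathSystem := ⟨by simp, by simp, by simp⟩
  index_lt v hv := by simp_all
  exists_index_eq i hi := by simp_all
  fits := by
    have hcode : code (φ ∘ fun _ => u) 1 = φ u := by simp [code, appendCode, funext_iff]
    have hmask : mask (φ ∘ fun _ => u) 1 = fun e => if φ u e = 0 then 0 else 1 := by
      simp [mask, appendMask, funext_iff]
    rwa [hcode, hmask]
  abs_le_one v hv := hone v (hv 0 zero_lt_one).symm

end Search

namespace Search

variable {C : Config} {N : ℕ} {φ : C.V → Fin N → ℤ} {u : C.V} {e : Fin N} {k : Kind}

set_option maxRecDepth 100000 in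
theorem refutes_doubled : refutes 0 (fun _ => false) 9 doubled = true := by
  decide +kernel

theorem tracks_single (hφ : C.IsEmbedding N φ) (hone : ∀ v e, |φ v e| ≤ 1)
    (hek : C.adjw u = k.excess) (hdk : C.deg u = k.degree) :
    Tracks C φ (fun _ => u) (single k) := by
  have hw : C.w u = k.weight := by rw [C.w_eq_adjw_add_deg, hek, hdk, Kind.weight, Nat.cast_add]
  refine tracks_one hek hdk (fun v _ => hone v)
    ⟨one_pos, supp (φ u), subset_univ _, ?_, fun e he => ?_, fun e he => ?_⟩
  · have := card_supp_eq_dot (hone u)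
    rw [hφ.dot_self, hw] at this
    exact_mod_cast this
  · have he := mem_supp.1 he
    exact ⟨(hone u e).antisymm (Int.one_le_abs he), if_neg he⟩
  · have he : φ u e = 0 := by simpa [mem_supp] using he
    exact ⟨he, if_pos he⟩

theorem tracks_doubled (hu : C.adjw u = 3) (hdeg : C.deg u = 2)
    (hone : ∀ v, v ≠ u → ∀ e, |φ v e| ≤ 1) {f : Fin N} (hfe : f ≠ e) (he : |φ u e| = 2)
    (hf : |φ u f| = 1) (hzero : ∀ i, i ≠ e → i ≠ f → φ u i = 0) :
    Tracks C φ (fun _ => u) doubled := by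
  refine tracks_one hu hdeg hone ⟨two_pos, {e}, subset_univ _, card_singleton e, ?_,
    one_pos, {f}, by simpa using hfe, card_singleton f, ?_, fun i hi => ?_⟩
  · simpa using ⟨he, fun h => by simp [h] at he⟩
  · simpa using ⟨hf, fun h => by simp [h] at hf⟩
  · simp only [mem_sdiff, mem_univ, mem_singleton, true_and] at hi
    simp [hzero i hi.1 hi.2]

end Search

namespace Config

open Search

variable {C : Config} {N : ℕ} {φ : C.V → Fin N → ℤ}

theorem IsEmbedding.not_exists_abs_eq_two (hφ : C.IsEmbedding N φ) (hlin : C.IsLinear)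
    (hwc : C.WorkingConditions) {v : C.V} (hv : C.adjw v = 3) (hdeg : C.deg v = 2) (e : Fin N) :
    |φ v e| ≠ 2 := by
  intro he
  have hone : ∀ z, z ≠ v → ∀ e, |φ z e| ≤ 1 := fun z hz =>
    hφ.abs_le_one_of_adjw_le_one hlin (not_lt.1 fun h => hz (hwc.2.2.1 z v h (by lia)))
  obtain ⟨f, hfe, hf, hzero⟩ := exists_abs_eq_one_of_dot_self_eq (a := φ v) (e := e)
    (by rw [hφ.dot_self, C.w_eq_adjw_add_deg, hv, hdeg, ← sq_abs, he]; norm_num)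
  have hmeets : ∀ u v, u ≠ v → C.w u + C.w v < (0 : ℕ) → C.MeetsProperly φ u v :=
    fun u v _ h => by
      have := hwc.1 u
      have := hwc.1 v
      lia
  obtain ⟨-, -, -, h, -⟩ := (tracks_doubled hv hdeg hone hfe he hf hzero).exists_of_refutes
    hlin hwc hφ hmeets refutes_doubled
  exact Bool.false_ne_true h

theorem IsEmbedding.abs_le_one (hφ : C.IsEmbedding N φ) (hlin : C.IsLinear)
    (hwc : C.WorkingConditions) (v : C.V) (e : Fin N) : |φ v e| ≤ 1 := by
  by_contra! h
  have : 1 < C.adjw v := not_le.1 fun hv =>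
    h.not_ge (hφ.abs_le_one_of_adjw_le_one hlin hv e)
  have hle := hwc.2.1 v
  have hdeg := hlin.1 v
  have hw := C.w_eq_adjw_add_deg v
  have hsq := hφ.dot_self v ▸ sq_le_dot_self (φ v) e
  have htwo : |φ v e| = 2 := by
    rw [← sq_abs] at hsq
    nlinarith
  have hw4 : C.w v = 4 ∨ C.adjw v = 3 ∧ C.deg v = 2 := by
    rw [← sq_abs, htwo] at hsq
    lia
  obtain hw4 | ⟨hv, hdeg⟩ := hw4
  · obtain ⟨u, hu⟩ := C.exists_adj_of_deg_pos (show 0 < C.deg v by lia)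
    refine hφ.not_even_of_adj (e := e) ?_ hu ?_
    · rw [← sq_abs, htwo, hw4]
      norm_num
    · rw [← even_abs, htwo]
      exact even_two
  · exact hφ.not_exists_abs_eq_two hlin hwc hv hdeg e htwo

end Config

/-! ### Supports of pairs of vertices -/

namespace Search

set_option maxRecDepth 100000 in
theorem checkPair_self : ∀ k ∈ allKinds, checkPair k k = true := by
  decide +kernel

set_option maxRecDepth 100000 in
theorem pairwise_checkPair : allKinds.Pairwise (checkPair · · = true) := by
  decide +kernel

theorem checkPair_or_checkPair {k l : Kind} (hk : k ∈ allKinds) (hl : l ∈ allKinds) :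
    checkPair k l = true ∨ checkPair l k = true := by
  have : Std.Symm fun k l => checkPair k l = true ∨ checkPair l k = true := ⟨fun _ _ => Or.symm⟩
  exact (pairwise_checkPair.imp Or.inl).forall_of_forall
    (R := fun k l => checkPair k l = true ∨ checkPair l k = true)
    (fun k hk => .inl (checkPair_self k hk)) hk hl

variable {C : Config} {N : ℕ} {φ : C.V → Fin N → ℤ} {x : ℕ → C.V} {st : State} {u v : C.V}
  {k l : Kind} {s fuel : ℕ} {ps : List (List Vertex)} {A : List ℕ} {accept : State → Bool}

theorem Tracks.inter_supp_of_acceptFar (ht : Tracks C φ x st) (hsize : 1 < st.size)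
    (h : acceptFar st = true) :
    #(supp (φ (x 0)) ∩ supp (φ (x 1))) = 0 ∨
      ∃ z, C.IsBad z ∧ C.graph.Adj z (x 0) ∧ C.graph.Adj z (x 1) ∧
        #(supp (φ (x 0)) ∩ supp (φ (x 1))) = 2 ∧
        #(supp (φ (x 0)) ∩ supp (φ z) ∩ supp (φ (x 1))) = 1 := by
  have hpos := zero_lt_one.trans hsize
  simp only [acceptFar, isCentreTriple, ht.fits.share_eq hpos hsize, Bool.or_eq_true,
    Bool.and_eq_true, Nat.beq_eq, List.any_eq_true, Function.comp_apply] at h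
  refine h.imp_right fun ⟨h2, t, hmem, ⟨hbad, hends⟩, h1⟩ => ?_
  obtain ⟨⟨-, hz, -⟩, -, hadj⟩ := ht.of_mem_triples hmem
  rw [ht.fits.mass_eq_card_inter hpos hsize (ht.index_lt _ hz)] at h1
  refine ⟨_, ht.isBad (List.mem_filter.2 ⟨hmem, hbad⟩), ?_, ?_, h2, h1⟩
  · obtain ⟨h0, -⟩ | ⟨-, h0⟩ := hends
    exacts [h0 ▸ hadj.1, h0 ▸ hadj.2]
  · obtain ⟨-, h1⟩ | ⟨h1, -⟩ := hends
    exacts [h1 ▸ hadj.2, h1 ▸ hadj.1]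

theorem Tracks.exists_of_addVertex_refutes (hlin : C.IsLinear) (hwc : C.WorkingConditions)
    (hφ : C.IsEmbedding N φ)
    (hmeets : ∀ u v, u ≠ v → C.w u + C.w v < s → C.MeetsProperly φ u v)
    (ht : Tracks C φ (fun _ => u) (single k)) (huv : u ≠ v) (hA : A.Nodup)
    (hmem : ∀ i, i ∈ A ↔ i < 1 ∧ C.graph.Adj v u)
    (hc : Charts C (Function.update (fun _ => u) 1 v) ps)
    (hperm : ps.flatten.Perm [⟨l, 1⟩, ⟨k, 0⟩])
    (h : addVertex s (single k) l ps A (refutes s accept fuel) = true) :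
    ∃ x st, Tracks C φ x st ∧ accept st = true ∧ 1 < st.size ∧ x 0 = u ∧ x 1 = v := by
  obtain ⟨gs, ht, hcont⟩ :=
    ht.exists_of_addVertex hlin hwc hφ hmeets (fun _ _ => huv) hA hmem hc hperm h
  obtain ⟨x, st, ht, haccept, hsize, hx⟩ := ht.exists_of_refutes hlin hwc hφ hmeets hcont
  exact ⟨x, st, ht, haccept, hsize, hx 0 two_pos, hx 1 one_lt_two⟩

theorem meetsProperly_of_checkPair (hlin : C.IsLinear) (hwc : C.WorkingConditions)
    (hφ : C.IsEmbedding N φ)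
    (hmeets : ∀ u v, u ≠ v → C.w u + C.w v < (k.weight + l.weight : ℕ) → C.MeetsProperly φ u v)
    (huv : u ≠ v) (heu : C.adjw u = k.excess) (hdu : C.deg u = k.degree)
    (hev : C.adjw v = l.excess) (hdv : C.deg v = l.degree) (h : checkPair k l = true) :
    C.MeetsProperly φ u v := by
  have hsingle := tracks_single hφ (hφ.abs_le_one hlin hwc) heu hdu
  have hlight : ¬ (1 < k.excess ∧ 1 < l.excess) := fun hheavy =>
    huv (hwc.2.2.1 u v (by lia) (by lia))
  simp only [checkPair, Bool.or_eq_true, Bool.and_eq_true, Nat.beq_eq, Nat.blt_eq, hlight,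
    false_or] at h
  refine ⟨fun hadj => ?_, fun hadj => ?_⟩
  · have hpos := (C.deg_pos hadj).ne'
    have hpos' := (C.deg_pos hadj.symm).ne'
    have hc : Charts C (Function.update (fun _ => u) 1 v) [[⟨l, 1⟩, ⟨k, 0⟩]] :=
      ⟨by simp [*], by simp [*], ⟨by simp [hadj.symm], by simp [huv.symm], by simp⟩⟩
    obtain ⟨x, st, ht, haccept, hsize, rfl, rfl⟩ :=
      hsingle.exists_of_addVertex_refutes hlin hwc hφ hmeets huv (List.nodup_singleton 0)
        (by simp [hadj.symm]) hc (.refl _) (h.2.resolve_left (by lia))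
    rwa [acceptAdj, ht.fits.share_eq (zero_lt_one.trans hsize) hsize, Nat.beq_eq] at haccept
  · rw [C.graph.adj_comm] at hadj
    have hc : Charts C (Function.update (fun _ => u) 1 v) [[⟨l, 1⟩], [⟨k, 0⟩]] :=
      ⟨by simp [*], by simp [*], ⟨by simp, by simp [huv.symm], by simp [hadj]⟩⟩
    obtain ⟨x, st, ht, haccept, hsize, rfl, rfl⟩ :=
      hsingle.exists_of_addVertex_refutes hlin hwc hφ hmeets huv List.nodup_nil
        (by simp [hadj]) hc (.refl _) h.1
    exact ht.inter_supp_of_acceptFar hsize haccept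

end Search

namespace Config

open Search

variable {C : Config} {N : ℕ} {φ : C.V → Fin N → ℤ}

theorem IsEmbedding.meetsProperly_of_lt (hφ : C.IsEmbedding N φ) (hlin : C.IsLinear)
    (hwc : C.WorkingConditions) (s : ℕ) :
    ∀ u v, u ≠ v → C.w u + C.w v < s → C.MeetsProperly φ u v := by
  induction s with
  | zero =>
    intro u v _ h
    have := hwc.1 u
    have := hwc.1 v
    lia
  | succ s ih =>
    intro u v huv h
    obtain ⟨k, hk, heu, hdu⟩ := exists_mem_allKinds hlin hwc u
    obtain ⟨l, hl, hev, hdv⟩ := exists_mem_allKinds hlin hwc v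
    have hs : ((k.weight + l.weight : ℕ) : ℤ) ≤ s := by
      have := C.w_eq_adjw_add_deg u
      have := C.w_eq_adjw_add_deg v
      simp only [Kind.weight]
      lia
    obtain h | h := checkPair_or_checkPair hk hl
    · exact meetsProperly_of_checkPair hlin hwc hφ
        (fun a b hab h => ih a b hab (h.trans_le hs)) huv heu hdu hev hdv h
    · exact (meetsProperly_of_checkPair hlin hwc hφ
        (fun a b hab h => ih a b hab (h.trans_le (by rwa [add_comm]))) huv.symm hev hdv heu hdu
        h).symm

theorem IsEmbedding.meetsProperly (hφ : C.IsEmbedding N φ) (hlin : C.IsLinear)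
    (hwc : C.WorkingConditions) {u v : C.V} (huv : u ≠ v) : C.MeetsProperly φ u v :=
  hφ.meetsProperly_of_lt hlin hwc (C.w u + C.w v + 1).toNat u v huv (by lia)

end Config

/-! ### Uniqueness of the centre -/

namespace Config

variable {C : Config} {N : ℕ} {φ : C.V → Fin N → ℤ} {u v x y z : C.V}

/-- A bad vertex at which `φ` looks semi-standard, rather than standard. -/
def IsCentre (C : Config) (φ : C.V → Fin N → ℤ) (x : C.V) : Prop :=
  C.IsBad x ∧ ∀ u v, u ≠ v → C.graph.Adj x u → C.graph.Adj x v →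
    #(supp (φ u) ∩ supp (φ v)) = 2 ∧ #(supp (φ u) ∩ supp (φ x) ∩ supp (φ v)) = 1

theorem isCentre_of_adj (hlin : C.IsLinear) (hx : C.IsBad x) (huv : u ≠ v)
    (hu : C.graph.Adj x u) (hv : C.graph.Adj x v) (h2 : #(supp (φ u) ∩ supp (φ v)) = 2)
    (h1 : #(supp (φ u) ∩ supp (φ x) ∩ supp (φ v)) = 1) : C.IsCentre φ x := by
  refine ⟨hx, fun a b hab ha hb => ?_⟩
  obtain rfl | rfl := hlin.eq_or_eq_of_adj huv hu hv ha <;>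
    obtain rfl | rfl := hlin.eq_or_eq_of_adj huv hu hv hb
  · exact absurd rfl hab
  · exact ⟨h2, h1⟩
  · refine ⟨inter_comm (supp (φ b)) _ ▸ h2, ?_⟩
    rwa [inter_right_comm, inter_comm (supp (φ a)), inter_right_comm]
  · exact absurd rfl hab

theorem IsEmbedding.inter_supp_eq_empty_of_isChain (hφ : C.IsEmbedding N φ) (hlin : C.IsLinear)
    (hwc : C.WorkingConditions) {l : List C.V}
    (h : (u :: x :: y :: l).IsChain C.graph.Adj ∧ (u :: x :: y :: l).Nodup) (hv : v ∈ l) :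
    supp (φ u) ∩ supp (φ v) = ∅ := by
  obtain ⟨hadj, hcommon⟩ := not_adj_and_not_exists_adj_of_isChain hlin.2 h hv
  have huv : u ≠ v := by
    rintro rfl
    simp [hv] at h
  obtain h0 | ⟨z, -, hzu, hzv, -⟩ := (hφ.meetsProperly hlin hwc huv).2 hadj
  · exact card_eq_zero.1 h0
  · exact absurd ⟨z, hzu, hzv⟩ hcommon

theorem IsCentre.not_adj (hφ : C.IsEmbedding N φ) (hlin : C.IsLinear)
    (hwc : C.WorkingConditions) (hx : C.IsCentre φ x) (hy : C.IsCentre φ y) :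
    ¬ C.graph.Adj x y := by
  intro hxy
  obtain ⟨u, huy, hu⟩ := C.exists_adj_ne_of_two_le_deg (hx.1.deg_eq_two hlin).ge y
  obtain ⟨v, hvx, hv⟩ := C.exists_adj_ne_of_two_le_deg (hy.1.deg_eq_two hlin).ge x
  have hchain : [x, y].IsChain C.graph.Adj ∧ [x, y].Nodup := by simp [hxy, hxy.ne]
  have hchain := isChain_and_nodup_cons hlin.2 hchain hu (by simpa using huy.symm)
  have hchain : [y, x, u].IsChain C.graph.Adj ∧ [y, x, u].Nodup :=
    isChain_and_nodup_reverse hchain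
  have hchain := isChain_and_nodup_cons hlin.2 hchain hv (by simpa using hvx.symm)
  have hempty := hφ.inter_supp_eq_empty_of_isChain hlin hwc hchain (List.mem_singleton_self u)
  obtain ⟨e, he⟩ := inter_nonempty_of_card_lt_card_add_card
    (s := supp (φ x) ∩ supp (φ y)) (t := supp (φ u) ∩ supp (φ x) ∩ supp (φ y))
    (u := supp (φ x) ∩ supp (φ y) ∩ supp (φ v)) (by grind) (by grind) (by
      rw [(hx.2 u y huy hu hxy).2, (hy.2 x v hvx.symm hxy.symm hv).2,
        (hφ.meetsProperly hlin hwc hxy.ne).1 hxy]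
      exact one_lt_two)
  exact notMem_empty e (hempty ▸ by grind)

theorem IsCentre.eq (hφ : C.IsEmbedding N φ) (hlin : C.IsLinear)
    (hwc : C.WorkingConditions) (hx : C.IsCentre φ x) (hy : C.IsCentre φ y) : x = y := by
  by_contra hxy
  obtain ⟨z, hxz, hyz, hz⟩ := (hwc.adj_or_exists_adj_of_isBad hx.1 hy.1 hxy).resolve_left
    (hx.not_adj hφ hlin hwc hy)
  obtain ⟨u, huz, hu⟩ := C.exists_adj_ne_of_two_le_deg (hx.1.deg_eq_two hlin).ge z
  obtain ⟨v, hvz, hv⟩ := C.exists_adj_ne_of_two_le_deg (hy.1.deg_eq_two hlin).ge z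
  have hchain : [x, z, y].IsChain C.graph.Adj ∧ [x, z, y].Nodup := by
    simp [hxz, hyz.symm, hxz.ne, hyz.ne', hxy]
  have hchain := isChain_and_nodup_cons hlin.2 hchain hu (by simpa using huz.symm)
  have hchain : [y, z, x, u].IsChain C.graph.Adj ∧ [y, z, x, u].Nodup :=
    isChain_and_nodup_reverse hchain
  have hchain := isChain_and_nodup_cons hlin.2 hchain hv (by simpa using hvz.symm)
  have hempty := hφ.inter_supp_eq_empty_of_isChain hlin hwc hchain (v := u) (by simp)
  have hcard : #(supp (φ z)) = 3 := by
    have := card_supp_eq_dot (hφ.abs_le_one hlin hwc z)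
    rw [hφ.dot_self, C.w_eq_adjw_add_deg, hz] at this
    have := two_le_deg hxy hxz.symm hyz.symm
    have := hlin.1 z
    lia
  obtain ⟨e, he⟩ := inter_nonempty_of_card_lt_card_add_card
    (s := supp (φ z)) (t := supp (φ u) ∩ supp (φ z)) (u := supp (φ v) ∩ supp (φ z))
    inter_subset_right inter_subset_right (by
      rw [(hx.2 u z huz hu hxz).1, (hy.2 v z hvz hv hyz).1, hcard]
      simp)
  exact notMem_empty e (hempty ▸ by grind)

open Classical in
theorem IsEmbedding.card_inter_supp (hφ : C.IsEmbedding N φ) (hlin : C.IsLinear)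
    (hwc : C.WorkingConditions) (u v : C.V) :
    (#(supp (φ u) ∩ supp (φ v)) : ℤ) =
      if u = v then C.w v
      else if C.graph.Adj u v then 1
      else if ∃ x, C.IsCentre φ x ∧ C.graph.Adj x u ∧ C.graph.Adj x v then 2
      else 0 := by
  split_ifs with huv hadj hcentre
  · rw [huv, inter_self, card_supp_eq_dot (hφ.abs_le_one hlin hwc v), hφ.dot_self]
  · rw [(hφ.meetsProperly hlin hwc huv).1 hadj, Nat.cast_one]
  · obtain ⟨x, hx, hu, hv⟩ := hcentre
    rw [(hx.2 u v huv hu hv).1, Nat.cast_ofNat]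
  · obtain h | ⟨x, hx, hu, hv, h2, h1⟩ := (hφ.meetsProperly hlin hwc huv).2 hadj
    · rw [h, Nat.cast_zero]
    · exact absurd ⟨x, isCentre_of_adj hlin hx huv hu hv h2 h1, hu, hv⟩ hcentre

theorem IsCentre.isSemiStandard (hφ : C.IsEmbedding N φ) (hlin : C.IsLinear)
    (hwc : C.WorkingConditions) (hx : C.IsCentre φ x) : C.IsSemiStandard N φ := by
  have hiff : ∀ u v, (∃ y, C.IsCentre φ y ∧ C.graph.Adj y u ∧ C.graph.Adj y v) ↔
      C.graph.Adj x u ∧ C.graph.Adj x v :=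
    fun u v => ⟨fun ⟨y, hy, h⟩ => hx.eq hφ hlin hwc hy ▸ h, fun h => ⟨x, hx, h⟩⟩
  refine ⟨x, hx.1, fun u _ v _ => ?_, fun u _ v _ huv hu hv => (hx.2 u v huv hu hv).2⟩
  simp only [hφ.card_inter_supp hlin hwc u v, hiff]

theorem isStandard_of_forall_not_isCentre (hφ : C.IsEmbedding N φ) (hlin : C.IsLinear)
    (hwc : C.WorkingConditions) (h : ∀ x, ¬ C.IsCentre φ x) : C.IsStandard N φ := by
  intro u _ v _
  simp only [hφ.card_inter_supp hlin hwc u v, h, false_and, exists_false, if_false]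

end Config

theorem statement12_general (C : Config) (hlin : C.IsLinear) (hwc : C.WorkingConditions)
    (N : ℕ) (φ : C.V → Fin N → ℤ) (hφ : C.IsEmbedding N φ) :
    C.IsStandard N φ ∨ C.IsSemiStandard N φ := by
  by_cases h : ∃ x, C.IsCentre φ x
  · obtain ⟨x, hx⟩ := h
    exact .inr (hx.isSemiStandard hφ hlin hwc)
  · exact .inl (C.isStandard_of_forall_not_isCentre hφ hlin hwc (not_exists.1 h))

/-- Lemma 5.13: every embedding of a configuration satisfying the Working Conditions
with at least one bad vertex is either standard or semi-standard. -/
theorem statement12 (C : Config) (hlin : C.IsLinear) (hwc : C.WorkingConditions)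
    (hbad : ∃ x : C.V, C.IsBad x) (N : ℕ) (hN : 0 < N)
    (φ : C.V → Fin N → ℤ) (hφ : C.IsEmbedding N φ) :
    C.IsStandard N φ ∨ C.IsSemiStandard N φ :=
  statement12_general C hlin hwc N φ hφ

end LensPaper
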